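/- For every integer r ≥ 2, there is a constant K = K(r) > 0 such that the following holds. Let W ⊆ [n] be a fixed set of at most n/(100r)^4 vertices, and let G ~ G(n,p) where p = p(n) ≫ (log n / n)^{1/2}. Then with high probability, for every r-coloring of the edges of G, there is a collection of 3r^2 vertex-disjoint monochromatic cycles that cover all but at most K/p vertices of W. -/

import Mathlib

open MeasureTheory Filter

noncomputable def bernoulliM (q : ℝ) : Measure Bool :=
  ENNReal.ofReal q • Measure.dirac true + ENNReal.ofReal (1 - q) • Measure.dirac false

noncomputable def gnp (n : ℕ) (q : ℝ) : Measure (Sym2 (Fin n) → Bool) :=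
  Measure.pi fun _ => bernoulliM q

def graphOf {n : ℕ} (ω : Sym2 (Fin n) → Bool) : SimpleGraph (Fin n) :=
  SimpleGraph.fromRel (fun u v => ω s(u, v))

def IsMonoCycle {V ι : Type*} (G : SimpleGraph V) (c : Sym2 V → ι) (i : ι) (S : Set V) : Prop :=
  (∃ v, S = {v}) ∨
  (∃ u v, G.Adj u v ∧ c s(u, v) = i ∧ S = {u, v}) ∨
  (∃ (v : V) (w : G.Walk v v), w.IsCycle ∧ (∀ e ∈ w.edges, c e = i) ∧ S = {x | x ∈ w.support})

/-!
Give every vertex of `W` a majority color of its edges to the complement of `W`. Within a color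
class of `W`, consider the auxiliary graph that joins two vertices with many common neighbours
outside `W` in that color. By counting edges, among `3r` disjoint sets of `k ≈ 200r/p` vertices of
the class there are two such that many outside vertices have many neighbours in both, and hence
there is an auxiliary edge between the two. A depth-first search therefore covers all but `O(rk)`
vertices of the class by `3r` disjoint cycles of the auxiliary graph: it reaches a set of between
`k` and `2k` unvisited vertices whose outer neighbours lie on the current path, this path closes up
to a cycle through all these neighbours, and deleting the set and the cycle leaves a graph with the
same property for one set fewer. Finally, replace the edges of these cycles by paths through
distinct common neighbours outside `W`; Hall's condition holds since a matching on `W` has few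
common neighbours in any small set. Altogether this gives `r · 3r` monochromatic cycles.
-/

open scoped Finset

section DepthFirstSearch

variable {V : Type*} {H : SimpleGraph V} {Z A R : Finset V} {P : List V} {a x y : V}

/-- `LinkedTo H A P x`: the list `P` extends backwards, by distinct vertices of `A`, to an
`H`-walk that starts at `x ∈ A`. -/
def LinkedTo (H : SimpleGraph V) (A : Finset V) (P : List V) (x : V) : Prop :=
  ∃ q : List V, (∀ z ∈ x :: q, z ∈ A) ∧ (x :: q).Nodup ∧ List.IsChain H.Adj ((x :: q) ++ P)

theorem linkedTo_of_adj_head (hx : x ∈ A) (hxa : H.Adj x a) (hP : List.IsChain H.Adj (a :: P)) :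
    LinkedTo H A (a :: P) x :=
  ⟨[], by simpa using hx, by simp, hP.cons_cons hxa⟩

theorem linkedTo_of_mem {l : List V} (hA : ∀ z ∈ l, z ∈ A) (hl : l.Nodup)
    (hP : List.IsChain H.Adj (l ++ P)) (hx : x ∈ l) : LinkedTo H A P x := by
  obtain ⟨l₁, l₂, rfl⟩ := List.append_of_mem hx
  rw [List.append_assoc] at hP
  exact ⟨l₂, fun z hz => hA z (List.mem_append_right _ hz), hl.of_append_right,
    hP.right_of_append⟩

theorem LinkedTo.of_adj (hy : LinkedTo H A P y) (hx : x ∈ A) (hxy : H.Adj x y) :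
    LinkedTo H A P x := by
  obtain ⟨q, hA, hq, hP⟩ := hy
  by_cases hxq : x ∈ y :: q
  · exact linkedTo_of_mem hA hq hP hxq
  · exact ⟨y :: q, List.forall_mem_cons.2 ⟨hx, hA⟩, List.nodup_cons.2 ⟨hxq, hq⟩, hP.cons_cons hxy⟩

theorem LinkedTo.exists_isChain_cons (hx : LinkedTo H A P x) :
    ∃ a ∈ A, List.IsChain H.Adj (a :: P) := by
  obtain ⟨q, hA, -, hP⟩ := hx
  refine ⟨(x :: q).getLast (by simp), hA _ (List.getLast_mem _), ?_⟩
  rw [← List.dropLast_append_getLast (l := x :: q) (by simp), List.append_assoc] at hP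
  exact hP.right_of_append

theorem forall_mem_of_isChain_of_closed {r : V → V → Prop}
    (hR : ∀ x ∈ R, ∀ y ∈ A, r x y → y ∈ R) :
    ∀ {l : List V} {x : V}, List.IsChain r (x :: l) → x ∈ R → (∀ z ∈ l, z ∈ A) →
      ∀ z ∈ x :: l, z ∈ R
  | [], _, _, hx, _ => by simpa using hx
  | y :: l, x, hc, hx, hA => by
    rw [List.isChain_cons_cons] at hc
    rw [List.forall_mem_cons] at hA ⊢
    exact ⟨hx, forall_mem_of_isChain_of_closed hR hc.2 (hR x hx y hA.1 hc.1) hA.2⟩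

theorem LinkedTo.of_closed (hx : LinkedTo H A P x) (hxR : x ∈ R)
    (hR : ∀ x ∈ R, ∀ y ∈ A, H.Adj x y → y ∈ R) : LinkedTo H R P x := by
  obtain ⟨q, hA, hq, hP⟩ := hx
  exact ⟨q, forall_mem_of_isChain_of_closed hR hP.left_of_append hxR
    (List.forall_mem_cons.1 hA).2, hq, hP⟩

/-- A state of a depth-first search of `H[Z]`: the path `P` of open vertices, listed from its tip,
and a set `A` of vertices not visited yet, whose neighbours in `Z` all lie in `A` or on `P`. -/
structure IsSearchState (H : SimpleGraph V) (Z : Finset V) (P : List V) (A : Finset V) :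
    Prop where
  subset : A ⊆ Z
  path_subset : ∀ x ∈ P, x ∈ Z
  path_disjoint : ∀ x ∈ P, x ∉ A
  path_nodup : P.Nodup
  path_isChain : List.IsChain H.Adj P
  closed : ∀ x ∈ A, ∀ y ∈ Z, H.Adj x y → y ∈ A ∨ y ∈ P
  linked : ∀ x ∈ A, LinkedTo H A P x

theorem isSearchState_nil (H : SimpleGraph V) (Z : Finset V) : IsSearchState H Z [] Z where
  subset := subset_rfl
  path_subset := by simp
  path_disjoint := by simp
  path_nodup := List.nodup_nil
  path_isChain := List.isChain_nil
  closed _ _ _ hy _ := Or.inl hy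
  linked x hx := ⟨[], by simpa using hx, by simp, by simp⟩

open scoped Classical in
theorem IsSearchState.advance (h : IsSearchState H Z P A) (ha : a ∈ A)
    (hP : List.IsChain H.Adj (a :: P)) :
    IsSearchState H Z (a :: P) {x ∈ A.erase a | LinkedTo H (A.erase a) (a :: P) x} where
  subset x hx := h.subset (Finset.mem_of_mem_erase (Finset.mem_filter.1 hx).1)
  path_subset := List.forall_mem_cons.2 ⟨h.subset ha, h.path_subset⟩
  path_disjoint := List.forall_mem_cons.2 ⟨by simp, fun x hx => by simp [h.path_disjoint x hx]⟩
  path_nodup := List.nodup_cons.2 ⟨fun haP => h.path_disjoint a haP ha, h.path_nodup⟩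
  path_isChain := hP
  closed x hx y hy hxy := by
    obtain ⟨hxA, hxP⟩ := Finset.mem_filter.1 hx
    by_cases hya : y = a
    · exact Or.inr (by simp [hya])
    refine (h.closed x (Finset.mem_of_mem_erase hxA) y hy hxy).imp (fun hyA => ?_)
      (List.mem_cons_of_mem a)
    have hyA' : y ∈ A.erase a := Finset.mem_erase.2 ⟨hya, hyA⟩
    exact Finset.mem_filter.2 ⟨hyA', hxP.of_adj hyA' hxy.symm⟩
  linked x hx := by
    obtain ⟨q, hA, hq, hqP⟩ := (Finset.mem_filter.1 hx).2
    exact ⟨q, fun z hz => Finset.mem_filter.2 ⟨hA z hz, linkedTo_of_mem hA hq hqP hz⟩, hq, hqP⟩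

open scoped Classical in
theorem IsSearchState.discard (h : IsSearchState H Z P A)
    (hP : List.IsChain H.Adj (a :: P)) :
    IsSearchState H Z P {x ∈ A.erase a | ¬ LinkedTo H (A.erase a) (a :: P) x} := by
  have hsub : {x ∈ A.erase a | ¬ LinkedTo H (A.erase a) (a :: P) x} ⊆ A :=
    (Finset.filter_subset _ _).trans (Finset.erase_subset _ _)
  have hclosed : ∀ x ∈ {x ∈ A.erase a | ¬ LinkedTo H (A.erase a) (a :: P) x}, ∀ y ∈ A,
      H.Adj x y → y ∈ {x ∈ A.erase a | ¬ LinkedTo H (A.erase a) (a :: P) x} := by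
    intro x hx y hy hxy
    obtain ⟨hxA, hxP⟩ := Finset.mem_filter.1 hx
    have hya : y ≠ a := by
      rintro rfl
      exact hxP (linkedTo_of_adj_head hxA hxy hP)
    exact Finset.mem_filter.2
      ⟨Finset.mem_erase.2 ⟨hya, hy⟩, fun hyP => hxP (hyP.of_adj hxA hxy)⟩
  exact
    { subset := hsub.trans h.subset
      path_subset := h.path_subset
      path_disjoint := fun x hx hxR => h.path_disjoint x hx (hsub hxR)
      path_nodup := h.path_nodup
      path_isChain := h.path_isChain
      closed := fun x hx y hy hxy =>
        (h.closed x (hsub hx) y hy hxy).imp_left fun hyA => hclosed x hx y hyA hxy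
      linked := fun x hx => (h.linked x (hsub hx)).of_closed hx hclosed }

open scoped Classical in
/-- One step of the search loses a vertex and splits the rest of `A` in two, so sizes cannot jump
over the interval `[k, 2k]`. -/
theorem IsSearchState.exists_card_le {k : ℕ} (hk : 0 < k) (h : IsSearchState H Z P A)
    (hA : k ≤ #A) : ∃ P' A', IsSearchState H Z P' A' ∧ k ≤ #A' ∧ #A' ≤ 2 * k := by
  induction hm : #A using Nat.strong_induction_on generalizing P A with
  | _ m ih =>
  by_cases hA' : #A ≤ 2 * k
  · exact ⟨P, A, h, hA, hA'⟩
  obtain ⟨x, hx⟩ : A.Nonempty := Finset.card_pos.1 (by omega)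
  obtain ⟨a, ha, hP⟩ := (h.linked x hx).exists_isChain_cons
  have hcard : #{x ∈ A.erase a | LinkedTo H (A.erase a) (a :: P) x} +
      #{x ∈ A.erase a | ¬ LinkedTo H (A.erase a) (a :: P) x} = #(A.erase a) :=
    Finset.card_filter_add_card_filter_not _
  have herase := Finset.card_erase_add_one ha
  by_cases hB : k ≤ #{x ∈ A.erase a | LinkedTo H (A.erase a) (a :: P) x}
  · exact ih _ (by omega) (h.advance ha hP) hB rfl
  · exact ih _ (by omega) (h.discard hP) (by omega) rfl

end DepthFirstSearch

section CycleFamilies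

variable {V : Type*} {H : SimpleGraph V} {Z A : Finset V} {P : List V} {k s : ℕ}

/-- `L` lists vertex-disjoint cycles of `H[Z]`, each given by its cyclic sequence of vertices. An
edge of `H` counts as a cycle with two vertices. -/
structure IsCycleFamily (H : SimpleGraph V) (Z : Finset V) (L : List (List V)) : Prop where
  nodup : L.flatten.Nodup
  subset : ∀ x ∈ L.flatten, x ∈ Z
  ne_nil : ∀ l ∈ L, l ≠ []
  chain : ∀ l ∈ L, Cycle.Chain H.Adj (l : Cycle V)

theorem isCycleFamily_nil (H : SimpleGraph V) (Z : Finset V) : IsCycleFamily H Z [] :=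
  ⟨by simp, by simp, by simp, by simp⟩

theorem isCycleFamily_singleton {l : List V} (hl : l.Nodup) (hZ : ∀ x ∈ l, x ∈ Z) (h0 : l ≠ [])
    (hc : Cycle.Chain H.Adj (l : Cycle V)) : IsCycleFamily H Z [l] :=
  ⟨by simpa using hl, by simpa using hZ, by simpa using h0, by simpa using hc⟩

theorem IsCycleFamily.mono {L : List (List V)} {Z' : Finset V} (h : IsCycleFamily H Z L)
    (hZ : Z ⊆ Z') : IsCycleFamily H Z' L :=
  ⟨h.nodup, fun x hx => hZ (h.subset x hx), h.ne_nil, h.chain⟩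

theorem IsCycleFamily.append {L L' : List (List V)} (h : IsCycleFamily H Z L)
    (h' : IsCycleFamily H Z L') (hd : L.flatten.Disjoint L'.flatten) :
    IsCycleFamily H Z (L ++ L') where
  nodup := by
    rw [List.flatten_append]
    exact h.nodup.append h'.nodup hd
  subset x hx := by
    rw [List.flatten_append, List.mem_append] at hx
    exact hx.elim (h.subset x) (h'.subset x)
  ne_nil l hl := (List.mem_append.1 hl).elim (h.ne_nil l) (h'.ne_nil l)
  chain l hl := (List.mem_append.1 hl).elim (h.chain l) (h'.chain l)

theorem exists_eq_append_cons_forall_not {α : Type*} {p : α → Prop} :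
    ∀ {l : List α}, (∃ x ∈ l, p x) → ∃ l₁ y l₂, l = l₁ ++ y :: l₂ ∧ p y ∧ ∀ z ∈ l₂, ¬ p z
  | [], h => by simp at h
  | a :: l, h => by
    by_cases hl : ∃ x ∈ l, p x
    · obtain ⟨l₁, y, l₂, rfl, hy, hl₂⟩ := exists_eq_append_cons_forall_not hl
      exact ⟨a :: l₁, y, l₂, rfl, hy, hl₂⟩
    · push Not at hl
      exact ⟨[], a, l, rfl,
        ((List.exists_mem_cons_iff ..).1 h).resolve_right (by simpa using hl), hl⟩

theorem cycle_chain_of_isChain_append {r : V → V → Prop} {l₁ l₂ : List V} {x y : V}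
    (h : List.IsChain r ((x :: l₁) ++ y :: l₂)) (hyx : r y x) :
    Cycle.Chain r (((x :: l₁) ++ [y] : List V) : Cycle V) := by
  rw [List.isChain_split] at h
  rw [List.cons_append, Cycle.chain_coe_cons, List.append_assoc, ← List.cons_append]
  exact List.isChain_split.2 ⟨h.1, by simpa using hyx⟩

/-- The cycle closes up at the last vertex of `P` that has a neighbour in `A`. -/
theorem IsSearchState.exists_isCycleFamily (h : IsSearchState H Z P A) :
    ∃ L : List (List V), L.length ≤ 1 ∧ IsCycleFamily H Z L ∧
      ∀ x ∈ A, ∀ y ∈ Z, H.Adj x y → y ∈ A ∨ y ∈ L.flatten := by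
  by_cases hP : ∃ y ∈ P, ∃ x ∈ A, H.Adj x y
  · obtain ⟨P₁, y, P₂, rfl, ⟨x, hx, hxy⟩, hP₂⟩ := exists_eq_append_cons_forall_not hP
    obtain ⟨q, hqA, hq, hqP⟩ := h.linked x hx
    have hsplit : P₁ ++ y :: P₂ = P₁ ++ [y] ++ P₂ := by simp
    have hmem : ∀ z ∈ P₁ ++ [y], z ∈ P₁ ++ y :: P₂ := fun z hz =>
      hsplit ▸ List.mem_append_left _ hz
    refine ⟨[(x :: q) ++ (P₁ ++ [y])], le_rfl, isCycleFamily_singleton ?_ ?_ (by simp) ?_, ?_⟩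
    · exact hq.append (hsplit ▸ h.path_nodup).of_append_left fun z hzq hzP =>
        h.path_disjoint z (hmem z hzP) (hqA z hzq)
    · exact fun z hz => (List.mem_append.1 hz).elim (fun hzq => h.subset (hqA z hzq))
        fun hzP => h.path_subset z (hmem z hzP)
    · rw [← List.append_assoc] at hqP ⊢
      exact cycle_chain_of_isChain_append hqP hxy.symm
    · intro a ha z hz haz
      refine (h.closed a ha z hz haz).imp_right fun hzP => ?_
      have hzP₂ : z ∉ P₂ := fun hzP₂ => hP₂ z hzP₂ ⟨a, ha, haz⟩
      have hzy : z ∈ P₁ ++ [y] := (List.mem_append.1 (hsplit ▸ hzP)).resolve_right hzP₂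
      exact List.mem_flatten.2 ⟨_, List.mem_singleton_self _, List.mem_append_right _ hzy⟩
  · push Not at hP
    exact ⟨[], by simp, isCycleFamily_nil H Z, fun x hx y hy hxy =>
      (h.closed x hx y hy hxy).imp_right fun hyP => absurd hxy (hP y hyP x hx)⟩

/-- `H` has an edge between two members of any family of `s` pairwise disjoint `k`-subsets
of `Z`. -/
def JoinsBlocks (H : SimpleGraph V) (k s : ℕ) (Z : Finset V) : Prop :=
  ∀ B : Fin s → Finset V, (∀ i, B i ⊆ Z) → (∀ i, #(B i) = k) →
    Pairwise (fun i j => Disjoint (B i) (B j)) →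
    ∃ i j, i ≠ j ∧ ∃ x ∈ B i, ∃ y ∈ B j, H.Adj x y

theorem JoinsBlocks.of_isolated {Z' : Finset V} (h : JoinsBlocks H k (s + 1) Z) (hA : A ⊆ Z)
    (hAk : k ≤ #A) (hZ' : Z' ⊆ Z) (hAZ' : Disjoint A Z')
    (hiso : ∀ x ∈ A, ∀ y ∈ Z', ¬ H.Adj x y) : JoinsBlocks H k s Z' := by
  intro B hBZ hBk hB
  obtain ⟨A', hA', hA'k⟩ := Finset.exists_subset_card_eq hAk
  have hA'B : ∀ i, Disjoint A' (B i) := fun i =>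
    Finset.disjoint_of_subset_left hA' (Finset.disjoint_of_subset_right (hBZ i) hAZ')
  have hA'iso : ∀ i, ∀ x ∈ A', ∀ y ∈ B i, ¬ H.Adj x y := fun i x hx y hy =>
    hiso x (hA' hx) y (hBZ i hy)
  obtain ⟨i, j, hij, x, hx, y, hy, hxy⟩ := h (Fin.cons A' B)
    (Fin.cases (hA'.trans hA) fun i => (hBZ i).trans hZ') (Fin.cases hA'k hBk) (by
      refine Fin.cases (Fin.cases (by simp) fun j _ => hA'B j)
        fun i => Fin.cases (fun _ => (hA'B i).symm) fun j hij => ?_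
      exact hB fun h => hij (congrArg _ h))
  cases i using Fin.cases with
  | zero =>
    cases j using Fin.cases with
    | zero => exact absurd rfl hij
    | succ j => exact absurd hxy (hA'iso j x hx y hy)
  | succ i =>
    cases j using Fin.cases with
    | zero => exact absurd hxy.symm (hA'iso i y hy x hx)
    | succ j => exact ⟨i, j, fun h => hij (congrArg _ h), x, hx, y, hy, hxy⟩

theorem JoinsBlocks.exists_isCycleFamily [DecidableEq V] (hk : 0 < k) (h : JoinsBlocks H k s Z) :
    ∃ L : List (List V), L.length ≤ s ∧ IsCycleFamily H Z L ∧
      #(Z \ L.flatten.toFinset) ≤ 2 * k * s := by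
  induction s generalizing Z with
  | zero =>
    obtain ⟨i, -⟩ := h Fin.elim0 Fin.rec0 Fin.rec0 (fun i => i.elim0)
    exact i.elim0
  | succ s ih =>
    by_cases hZ : #Z < k
    · exact ⟨[], by simp, isCycleFamily_nil H Z, by simp; nlinarith⟩
    obtain ⟨P, A, hPA, hAk, hA⟩ := (isSearchState_nil H Z).exists_card_le hk (not_lt.1 hZ)
    obtain ⟨L, hL1, hL, hLA⟩ := hPA.exists_isCycleFamily
    have hmem : ∀ x, x ∈ (Z \ A) \ L.flatten.toFinset ↔ (x ∈ Z ∧ x ∉ A) ∧ x ∉ L.flatten := by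
      simp only [Finset.mem_sdiff, List.mem_toFinset, implies_true]
    obtain ⟨L', hL's, hL', hcard⟩ := ih (Z := (Z \ A) \ L.flatten.toFinset)
      (h.of_isolated hPA.subset hAk (Finset.sdiff_subset.trans Finset.sdiff_subset)
        (Finset.disjoint_right.2 fun x hx => ((hmem x).1 hx).1.2) fun x hx y hy hxy =>
          (hLA x hx y ((hmem y).1 hy).1.1 hxy).elim ((hmem y).1 hy).1.2 ((hmem y).1 hy).2)
    refine ⟨L ++ L', by rw [List.length_append]; omega, hL.append
      (hL'.mono (Finset.sdiff_subset.trans Finset.sdiff_subset))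
      fun x hx hx' => ((hmem x).1 (hL'.subset x hx')).2 hx, ?_⟩
    have hsub : Z \ (L ++ L').flatten.toFinset ⊆
        A ∪ ((Z \ A) \ L.flatten.toFinset) \ L'.flatten.toFinset := by
      intro x hx
      rw [Finset.mem_sdiff, List.mem_toFinset, List.flatten_append, List.mem_append] at hx
      rw [Finset.mem_union, Finset.mem_sdiff, hmem, List.mem_toFinset]
      tauto
    calc #(Z \ (L ++ L').flatten.toFinset)
        ≤ #A + #(((Z \ A) \ L.flatten.toFinset) \ L'.flatten.toFinset) :=
          (Finset.card_le_card hsub).trans (Finset.card_union_le _ _)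
      _ ≤ 2 * k + 2 * k * s := add_le_add hA hcard
      _ = 2 * k * (s + 1) := by ring

theorem exists_isCycleFamily_of_fibers [DecidableEq V] {ι : Type*} [DecidableEq ι] (col : V → ι)
    (hk : 0 < k) (h : ∀ i, JoinsBlocks H k s {x ∈ Z | col x = i}) (T : Finset ι) :
    ∃ L : List (List V), L.length ≤ #T * s ∧ IsCycleFamily H {x ∈ Z | col x ∈ T} L ∧
      #({x ∈ Z | col x ∈ T} \ L.flatten.toFinset) ≤ #T * (2 * k * s) := by
  induction T using Finset.induction_on with
  | empty => exact ⟨[], by simp, isCycleFamily_nil H _, by simp⟩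
  | insert i T hi ih =>
    obtain ⟨L, hLs, hL, hcard⟩ := ih
    obtain ⟨L', hLs', hL', hcard'⟩ := (h i).exists_isCycleFamily hk
    have hmem : ∀ x, x ∈ ({x ∈ Z | col x ∈ insert i T} : Finset V) ↔
        x ∈ ({x ∈ Z | col x = i} : Finset V) ∨ x ∈ ({x ∈ Z | col x ∈ T} : Finset V) := by
      simp only [Finset.mem_filter, Finset.mem_insert]
      tauto
    have hd : L'.flatten.Disjoint L.flatten := fun x hx' hx => by
      have hxi := (Finset.mem_filter.1 (hL'.subset x hx')).2
      exact hi (hxi ▸ (Finset.mem_filter.1 (hL.subset x hx)).2)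
    rw [Finset.card_insert_of_notMem hi, Nat.succ_mul, Nat.succ_mul]
    refine ⟨L' ++ L, by rw [List.length_append]; omega,
      (hL'.mono fun x hx => (hmem x).2 (.inl hx)).append (hL.mono fun x hx => (hmem x).2 (.inr hx))
        hd, ?_⟩
    have hsub : {x ∈ Z | col x ∈ insert i T} \ (L' ++ L).flatten.toFinset ⊆
        ({x ∈ Z | col x ∈ T} \ L.flatten.toFinset) ∪
          ({x ∈ Z | col x = i} \ L'.flatten.toFinset) := by
      intro x hx
      rw [Finset.mem_sdiff, hmem, List.mem_toFinset, List.flatten_append, List.mem_append] at hx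
      rw [Finset.mem_union, Finset.mem_sdiff, Finset.mem_sdiff, List.mem_toFinset,
        List.mem_toFinset]
      tauto
    exact (Finset.card_le_card hsub).trans
      ((Finset.card_union_le _ _).trans (add_le_add hcard hcard'))

end CycleFamilies

section Counting

open Finset

variable {α β ι : Type*}

theorem card_mul_le_card_biUnion_add [DecidableEq α] {T : Finset ι}
    {X : ι → Finset α} {x y : ℝ} (hx : ∀ i ∈ T, x ≤ #(X i))
    (hy : (T : Set ι).Pairwise fun i j => (#(X i ∩ X j) : ℝ) ≤ y) :
    #T * x ≤ #(T.biUnion X) + #T * (#T - 1) / 2 * y := by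
  classical
  induction T using Finset.induction_on with
  | empty => simp
  | insert i T hi ih =>
    rw [Finset.coe_insert, Set.pairwise_insert_of_notMem (by simpa using hi)] at hy
    have ih := ih (fun j hj => hx j (mem_insert_of_mem hj)) hy.1
    have hi_inter : (#(X i ∩ T.biUnion X) : ℝ) ≤ #T * y := by
      rw [inter_biUnion, ← nsmul_eq_mul, ← Finset.sum_const]
      calc (#(T.biUnion fun j => X i ∩ X j) : ℝ)
          ≤ ∑ j ∈ T, (#(X i ∩ X j) : ℝ) := mod_cast card_biUnion_le
        _ ≤ ∑ _ ∈ T, y := sum_le_sum fun j hj => (hy.2 j hj).1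
    have hunion : (#(X i ∪ T.biUnion X) : ℝ) + #(X i ∩ T.biUnion X) = #(X i) + #(T.biUnion X) :=
      mod_cast card_union_add_card_inter _ _
    rw [biUnion_insert, card_insert_of_notMem hi, Nat.cast_add_one]
    linarith [hx i (mem_insert_self i T)]

theorem exists_ne_lt_card_inter [DecidableEq α] {s : ℕ} {m μ : ℝ} {U : Finset α}
    {X : Fin s → Finset α} (hXU : ∀ i, X i ⊆ U)
    (hX : ∀ i, m ≤ #(X i)) (hμ : #U + s * (s - 1) / 2 * μ < s * m) :
    ∃ i j, i ≠ j ∧ μ < #(X i ∩ X j) := by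
  by_contra! hle
  have hbonf := card_mul_le_card_biUnion_add (T := univ) (X := X) (fun i _ => hX i)
    fun i _ j _ hij => hle i j hij
  have hunion : (#(univ.biUnion X) : ℝ) ≤ #U :=
    mod_cast card_le_card (biUnion_subset.2 fun i _ => hXU i)
  rw [card_fin] at hbonf
  linarith

variable (R : α → β → Prop) [∀ a b, Decidable (R a b)]

theorem card_interedges_eq_sum_card_bipartiteAbove (A : Finset α) (X : Finset β) :
    #(Rel.interedges R A X) = ∑ a ∈ A, #(X.bipartiteAbove R a) := by
  simp only [Rel.interedges, bipartiteAbove, Finset.card_filter, sum_product]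

theorem sum_card_bipartiteAbove_le_card_interedges_add (A : Finset α) (U : Finset β) {t : ℝ}
    (ht : 0 ≤ t) :
    (∑ a ∈ A, #(U.bipartiteAbove R a) : ℝ) ≤
      #(Rel.interedges R A {u ∈ U | t ≤ #(A.bipartiteBelow R u)}) + #U * t := by
  have hlight : ∑ u ∈ U with ¬ t ≤ #(A.bipartiteBelow R u), (#(A.bipartiteBelow R u) : ℝ) ≤
      #U * t :=
    calc ∑ u ∈ U with ¬ t ≤ #(A.bipartiteBelow R u), (#(A.bipartiteBelow R u) : ℝ)
        ≤ #{u ∈ U | ¬ t ≤ #(A.bipartiteBelow R u)} * t := by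
          rw [← nsmul_eq_mul]
          exact sum_le_card_nsmul _ _ _ fun u hu => (not_le.1 (mem_filter.1 hu).2).le
      _ ≤ #U * t := by gcongr; exact filter_subset _ _
  have hheavy : (#(Rel.interedges R A {u ∈ U | t ≤ #(A.bipartiteBelow R u)}) : ℝ) =
      ∑ u ∈ U with t ≤ #(A.bipartiteBelow R u), (#(A.bipartiteBelow R u) : ℝ) := by
    rw [card_interedges_eq_sum_card_bipartiteAbove,
      sum_card_bipartiteAbove_eq_sum_card_bipartiteBelow, Nat.cast_sum]
  calc (∑ a ∈ A, #(U.bipartiteAbove R a) : ℝ) = ∑ u ∈ U, (#(A.bipartiteBelow R u) : ℝ) :=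
        mod_cast sum_card_bipartiteAbove_eq_sum_card_bipartiteBelow R
    _ = #(Rel.interedges R A {u ∈ U | t ≤ #(A.bipartiteBelow R u)}) +
        ∑ u ∈ U with ¬ t ≤ #(A.bipartiteBelow R u), (#(A.bipartiteBelow R u) : ℝ) := by
      rw [hheavy, sum_filter_add_sum_filter_not]
    _ ≤ _ := by gcongr

theorem sum_card_bipartiteBelow_mul_card_bipartiteBelow (A B : Finset α) (U : Finset β) :
    ∑ u ∈ U, #(A.bipartiteBelow R u) * #(B.bipartiteBelow R u) =
      ∑ a ∈ A, ∑ b ∈ B, #{u ∈ U | R a u ∧ R b u} := by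
  have hprod : ∀ u, #(A.bipartiteBelow R u) * #(B.bipartiteBelow R u) =
      #((A ×ˢ B).bipartiteBelow (fun z v => R z.1 v ∧ R z.2 v) u) := fun u => by
    rw [← card_product]
    congr 1
    ext z
    simp only [mem_product, mem_bipartiteBelow]
    tauto
  simp only [hprod]
  rw [← sum_card_bipartiteAbove_eq_sum_card_bipartiteBelow, sum_product]
  rfl

theorem exists_le_card_common_of_card_heavy {A B : Finset α} {U : Finset β} {t μ θ : ℝ}
    (ht : 0 < t) (hθ : #A * #B * θ ≤ μ * t ^ 2)
    (hμ : μ < #{u ∈ U | t ≤ #(A.bipartiteBelow R u) ∧ t ≤ #(B.bipartiteBelow R u)}) :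
    ∃ a ∈ A, ∃ b ∈ B, θ ≤ #{u ∈ U | R a u ∧ R b u} := by
  by_contra! hlt
  have hupper : (∑ u ∈ U, #(A.bipartiteBelow R u) * #(B.bipartiteBelow R u) : ℝ) ≤
      #A * #B * θ := by
    have h := sum_card_bipartiteBelow_mul_card_bipartiteBelow R A B U
    rw [← sum_product'] at h
    calc (∑ u ∈ U, #(A.bipartiteBelow R u) * #(B.bipartiteBelow R u) : ℝ)
        = ∑ z ∈ A ×ˢ B, (#{u ∈ U | R z.1 u ∧ R z.2 u} : ℝ) := mod_cast h
      _ ≤ #(A ×ˢ B) • θ := sum_le_card_nsmul _ _ _ fun z hz =>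
          (hlt z.1 (mem_product.1 hz).1 z.2 (mem_product.1 hz).2).le
      _ = #A * #B * θ := by rw [card_product, nsmul_eq_mul, Nat.cast_mul]
  have hlower : #{u ∈ U | t ≤ #(A.bipartiteBelow R u) ∧ t ≤ #(B.bipartiteBelow R u)} * t ^ 2 ≤
      (∑ u ∈ U, #(A.bipartiteBelow R u) * #(B.bipartiteBelow R u) : ℝ) := by
    rw [← nsmul_eq_mul]
    refine (card_nsmul_le_sum _ _ _ fun u hu => ?_).trans
      (sum_le_sum_of_subset_of_nonneg (filter_subset _ _) fun _ _ _ => by positivity)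
    obtain ⟨-, hA, hB⟩ := mem_filter.1 hu
    rw [sq]
    gcongr
  have := mul_lt_mul_of_pos_right hμ (pow_pos ht 2)
  linarith

/-- A maximal set `T'` with `τ x ∉ T'` for `x ∈ T'` works: by maximality each element of `T` lies
in `T'`, in `τ '' T'` or in `τ ⁻¹' T'`. -/
theorem exists_subset_forall_ne_card_le {τ : α → α} {T : Finset α}
    (hτ : Set.InjOn τ T) (hne : ∀ x ∈ T, τ x ≠ x) :
    ∃ T' ⊆ T, (∀ x ∈ T', ∀ y ∈ T', τ x ≠ y) ∧ #T ≤ 3 * #T' := by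
  have := Classical.decEq α
  obtain ⟨T', hT', hmax⟩ := exists_max_image
    (T.powerset.filter fun S => ∀ x ∈ S, ∀ y ∈ S, τ x ≠ y) Finset.card ⟨∅, by simp⟩
  rw [mem_filter, mem_powerset] at hT'
  refine ⟨T', hT'.1, hT'.2, ?_⟩
  have hcover : T ⊆ (T' ∪ T'.image τ) ∪ {x ∈ T | τ x ∈ T'} := by
    intro x hx
    by_contra hnot
    simp only [mem_union, mem_image, mem_filter, not_or, not_exists, not_and] at hnot
    obtain ⟨⟨hxT', himage⟩, hpreimage⟩ := hnot
    have hins : insert x T' ∈ T.powerset.filter fun S => ∀ x ∈ S, ∀ y ∈ S, τ x ≠ y := by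
      simp only [mem_filter, mem_powerset, forall_mem_insert]
      exact ⟨insert_subset hx hT'.1, ⟨hne x hx, fun y hy h => hpreimage hx (h ▸ hy)⟩,
        fun y hy => ⟨himage y hy, hT'.2 y hy⟩⟩
    have := hmax _ hins
    rw [card_insert_of_notMem hxT'] at this
    omega
  have himage : #(T'.image τ) ≤ #T' := card_image_le
  have hpreimage : #{x ∈ T | τ x ∈ T'} ≤ #T' :=
    card_le_card_of_injOn τ (fun x hx => (mem_filter.1 hx).2)
      (hτ.mono fun x hx => (mem_filter.1 hx).1)
  have := card_le_card hcover
  have := card_union_le (T' ∪ T'.image τ) {x ∈ T | τ x ∈ T'}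
  have := card_union_le T' (T'.image τ)
  omega

end Counting

section CyclicLists

variable {V : Type*} {r : V → V → Prop} {l : List V}

theorem cycle_chain_iff_forall_formPerm [DecidableEq V] (hl : l.Nodup) :
    Cycle.Chain r (l : Cycle V) ↔ ∀ x ∈ l, r x (l.formPerm x) := by
  cases l with
  | nil => simp
  | cons a l =>
    rw [Cycle.chain_coe_cons, ← List.cons_append, List.isChain_iff_getElem,
      List.forall_mem_iff_forall_getElem]
    have hstep : ∀ i (hi : i < (a :: l).length) (hi' : i + 1 < (a :: l ++ [a]).length),
        (a :: l ++ [a])[i + 1] = (a :: l).formPerm (a :: l)[i] := fun i hi hi' => by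
      rw [List.formPerm_apply_getElem _ hl i hi]
      obtain h | h := (Nat.succ_le_of_lt hi).lt_or_eq
      · simp only [List.getElem_append_left h, Nat.mod_eq_of_lt h]
      · obtain rfl : i = l.length := by simpa using h
        simp
    refine ⟨fun h i hi => ?_, fun h i hi => ?_⟩
    · have hi' : i + 1 < (a :: l ++ [a]).length := by simpa using hi
      simpa only [hstep i hi hi', List.getElem_append_left hi] using h i hi'
    · have hi' : i < (a :: l).length := by simpa using hi
      simpa only [hstep i hi' hi, List.getElem_append_left hi'] using h i hi'

theorem prod_map_formPerm_apply_of_notMem [DecidableEq V] {x : V} {L : List (List V)}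
    (hx : x ∉ L.flatten) : (L.map List.formPerm).prod x = x := by
  induction L with
  | nil => rfl
  | cons l L ih =>
    rw [List.flatten_cons, List.mem_append, not_or] at hx
    rw [List.map_cons, List.prod_cons, Equiv.Perm.mul_apply, ih hx.2,
      List.formPerm_apply_of_notMem hx.1]

theorem prod_map_formPerm_apply [DecidableEq V] {x : V} {L : List (List V)} (hL : L.flatten.Nodup)
    (hl : l ∈ L) (hx : x ∈ l) : (L.map List.formPerm).prod x = l.formPerm x := by
  induction L with
  | nil => simp at hl
  | cons l' L ih =>
    rw [List.flatten_cons, List.nodup_append'] at hL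
    rw [List.map_cons, List.prod_cons, Equiv.Perm.mul_apply]
    obtain rfl | hl := List.mem_cons.1 hl
    · rw [prod_map_formPerm_apply_of_notMem (hL.2.2 hx)]
    · rw [ih hL.2.1 hl, List.formPerm_apply_of_notMem fun h =>
        hL.2.2 h (List.mem_flatten.2 ⟨l, hl, List.formPerm_apply_mem_of_mem hx⟩)]

theorem isChain_flatMap_append_singleton {g : V → V} {b : V} (hg : ∀ x ∈ l, r x (g x))
    (hl : List.IsChain (fun x y => r (g x) y) (l ++ [b])) :
    List.IsChain r (l.flatMap (fun x => [x, g x]) ++ [b]) := by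
  induction l with
  | nil => simp
  | cons a l ih =>
    obtain ⟨ha, hg⟩ := List.forall_mem_cons.1 hg
    have hl' := ih hg hl.tail
    cases l with
    | nil => simpa [ha] using hl
    | cons x l =>
      simp only [List.cons_append, List.flatMap_cons, List.nil_append, List.isChain_cons_cons]
        at hl hl' ⊢
      exact ⟨ha, hl.1, hl'⟩

theorem cycle_chain_flatMap {g : V → V} (hg : ∀ x ∈ l, r x (g x))
    (hl : Cycle.Chain (fun x y => r (g x) y) (l : Cycle V)) :
    Cycle.Chain r ((l.flatMap fun x => [x, g x] : List V) : Cycle V) := by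
  cases l with
  | nil => simp
  | cons a l =>
    rw [Cycle.chain_coe_cons] at hl
    have := isChain_flatMap_append_singleton hg hl
    simpa only [List.flatMap_cons, List.cons_append, List.nil_append,
      Cycle.chain_coe_cons] using this

theorem length_flatMap_pair (l : List V) (g : V → V) :
    (l.flatMap fun x => [x, g x]).length = 2 * l.length := by
  simp [List.length_flatMap, mul_comm]

theorem mem_flatMap_pair {g : V → V} {x : V} :
    x ∈ l.flatMap (fun y => [y, g y]) ↔ x ∈ l ∨ x ∈ l.map g := by
  simp only [List.mem_flatMap, List.mem_cons, List.not_mem_nil, or_false, List.mem_map]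
  grind

theorem nodup_flatMap_pair {g : V → V} (hl : l.Nodup) (hg : Set.InjOn g {x | x ∈ l})
    (hgl : ∀ x ∈ l, g x ∉ l) : (l.flatMap fun x => [x, g x]).Nodup := by
  rw [List.nodup_flatMap]
  refine ⟨fun x hx => by simpa using fun h : x = g x => hgl x hx (h ▸ hx),
    hl.imp_of_mem fun {a b} ha hb hab => ?_⟩
  have hab' : a ≠ g b := fun h => hgl b hb (h ▸ ha)
  have hba' : b ≠ g a := fun h => hgl a ha (h ▸ hb)
  have hgab : g a ≠ g b := fun h => hab (hg ha hb h)
  simp [Function.onFun, hab.symm, hab'.symm, hba', hgab.symm]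

/-- The subgraph of `G` formed by the edges with color `i` in the coloring `c`. -/
def colorClass {ι : Type*} (G : SimpleGraph V) (c : Sym2 V → ι) (i : ι) : SimpleGraph V :=
  G ⊓ SimpleGraph.fromEdgeSet (c ⁻¹' {i})

theorem colorClass_adj {ι : Type*} {G : SimpleGraph V} {c : Sym2 V → ι} {i : ι} {u v : V} :
    (colorClass G c i).Adj u v ↔ G.Adj u v ∧ c s(u, v) = i := by
  simp only [colorClass, SimpleGraph.inf_adj, SimpleGraph.fromEdgeSet_adj, Set.mem_preimage,
    Set.mem_singleton_iff]
  exact ⟨fun h => ⟨h.1, h.2.1⟩, fun h => ⟨h.1, h.2, h.1.ne⟩⟩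

theorem exists_isCycle_of_cycle_chain {H : SimpleGraph V} (hl : l.Nodup) (hlen : 3 ≤ l.length)
    (hc : Cycle.Chain H.Adj (l : Cycle V)) :
    ∃ (v : V) (w : H.Walk v v), w.IsCycle ∧ ∀ x, x ∈ w.support ↔ x ∈ l := by
  obtain ⟨a, l, rfl⟩ := List.exists_cons_of_length_pos (by omega : 0 < l.length)
  rw [Cycle.chain_coe_cons, ← List.cons_append, List.isChain_append] at hc
  have hlast : H.Adj ((a :: l).getLast (by simp)) a :=
    hc.2.2 _ (List.getLast?_eq_some_getLast _) a rfl
  obtain ⟨w, hw⟩ : ∃ w : H.Walk a ((a :: l).getLast (by simp)), w.support = a :: l :=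
    ⟨.ofSupport (a :: l) (by simp) hc.1, SimpleGraph.Walk.support_ofSupport ..⟩
  have hwlen : w.length + 1 = (a :: l).length :=
    w.length_support.symm.trans (congrArg List.length hw)
  refine ⟨_, .cons hlast w, ?_, fun x => ?_⟩
  · rw [SimpleGraph.Walk.isCycle_iff_isPath_tail_and_le_length, SimpleGraph.Walk.isPath_def,
      SimpleGraph.Walk.support_tail_of_not_nil _ (by simp), SimpleGraph.Walk.length_cons,
      SimpleGraph.Walk.support_cons, List.tail_cons, hw]
    exact ⟨hl, hwlen ▸ hlen⟩
  · rw [SimpleGraph.Walk.support_cons, hw, List.mem_cons, or_iff_right_of_imp]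
    rintro rfl
    exact List.getLast_mem _

theorem isMonoCycle_of_cycle_chain {ι : Type*} {G : SimpleGraph V} {c : Sym2 V → ι} {i : ι}
    (hl : l.Nodup) (hlen : 3 ≤ l.length)
    (hc : Cycle.Chain (colorClass G c i).Adj (l : Cycle V)) : IsMonoCycle G c i {x | x ∈ l} := by
  obtain ⟨v, w, hw, hsupp⟩ := exists_isCycle_of_cycle_chain hl hlen hc
  have hle : colorClass G c i ≤ G := inf_le_left
  refine .inr (.inr ⟨v, w.mapLe hle, hw.mapLe hle, fun e he => ?_, ?_⟩)
  · rw [SimpleGraph.Walk.edges_mapLe_eq_edges] at he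
    induction e with
    | _ x y => exact (colorClass_adj.1 (w.adj_of_mem_edges he)).2
  · simp only [SimpleGraph.Walk.support_mapLe_eq_support, hsupp]

end CyclicLists

section Connectors

open Finset
open scoped Classical

variable {V ι : Type*} [DecidableEq V] {G : SimpleGraph V} {R : V → V → Prop}
  {c : Sym2 V → ι} {col : V → ι} {W A : Finset V} {k s : ℕ} {d m β t θ μ δ : ℝ}

/-- The pairs in `Q` are disjoint pairs of vertices of `W`, i.e. `Q` is an (oriented) matching of
the complete graph on `W`. -/
structure IsMatchingOn (W : Finset V) (Q : Finset (V × V)) : Prop where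
  subset : Q ⊆ W ×ˢ W
  injOn_fst : Set.InjOn Prod.fst (Q : Set (V × V))
  injOn_snd : Set.InjOn Prod.snd (Q : Set (V × V))
  fst_ne_snd : ∀ z ∈ Q, ∀ z' ∈ Q, z.1 ≠ z'.2

theorem isMatchingOn_image_pair {T : Finset V} {τ : V → V} (hT : T ⊆ W)
    (hτW : ∀ x ∈ T, τ x ∈ W) (hτ : Set.InjOn τ T) (hne : ∀ x ∈ T, ∀ y ∈ T, τ x ≠ y) :
    IsMatchingOn W (T.image fun x => (x, τ x)) where
  subset := image_subset_iff.2 fun x hx => mem_product.2 ⟨hT hx, hτW x hx⟩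
  injOn_fst := by
    rw [coe_image]
    rintro _ ⟨x, -, rfl⟩ _ ⟨y, -, rfl⟩ rfl
    rfl
  injOn_snd := by
    rw [coe_image]
    rintro _ ⟨x, hx, rfl⟩ _ ⟨y, hy, rfl⟩ h
    rw [hτ hx hy h]
  fst_ne_snd := by
    simp only [forall_mem_image]
    exact fun x hx y hy => (hne y hy x hx).symm

variable [Fintype V]

/-- Every vertex of `W` has at least `δ` neighbours outside `W`. -/
def HasCrossDegree (G : SimpleGraph V) (W : Finset V) (δ : ℝ) : Prop :=
  ∀ w ∈ W, δ ≤ #(Wᶜ.bipartiteAbove G.Adj w)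

/-- Every `k`-subset of `W` sends fewer than `β` edges to every set of at most `m` vertices outside
`W`. -/
def IsCrossSparse (G : SimpleGraph V) (W : Finset V) (k : ℕ) (m β : ℝ) : Prop :=
  ∀ A ⊆ W, #A = k → ∀ X ⊆ Wᶜ, #X ≤ m → #(Rel.interedges G.Adj A X) < β

/-- The pairs of a nonempty matching `Q` on `W` have on average fewer than `θ` common neighbours in
any set of at most `3|Q|` vertices outside `W`. -/
def HasFewCherries (G : SimpleGraph V) (W : Finset V) (θ : ℝ) : Prop :=
  ∀ Q, IsMatchingOn W Q → Q.Nonempty → ∀ X ⊆ Wᶜ, #X ≤ 3 * #Q →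
    #(Rel.interedges (fun z u => G.Adj z.1 u ∧ G.Adj z.2 u) Q X) < #Q * θ

theorem HasFewCherries.card_le_card_biUnion (h : HasFewCherries G W θ) {S : Finset V} {τ : V → V}
    {N : V → Finset V} (hS : S ⊆ W) (hτW : ∀ x ∈ S, τ x ∈ W) (hτ : Set.InjOn τ S)
    (hne : ∀ x ∈ S, τ x ≠ x) (hN : ∀ x ∈ S, N x ⊆ Wᶜ) (hθ : ∀ x ∈ S, θ ≤ #(N x))
    (hadj : ∀ x ∈ S, ∀ u ∈ N x, G.Adj x u ∧ G.Adj (τ x) u) : #S ≤ #(S.biUnion N) := by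
  by_contra! hlt
  obtain ⟨T, hTS, hT, hcard⟩ := exists_subset_forall_ne_card_le hτ hne
  have hpair : Function.Injective fun x => (x, τ x) := fun x y hxy => congrArg Prod.fst hxy
  have hcardQ : #(T.image fun x => (x, τ x)) = #T := card_image_of_injective _ hpair
  have hTne : T.Nonempty := card_pos.1 (by omega)
  have hfew := h _
    (isMatchingOn_image_pair (hTS.trans hS) (fun x hx => hτW x (hTS hx)) (hτ.mono hTS) hT)
    (hTne.image _) (S.biUnion N) (biUnion_subset.2 hN) (by omega)
  rw [card_interedges_eq_sum_card_bipartiteAbove, hcardQ, sum_image hpair.injOn] at hfew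
  refine hfew.not_ge ?_
  calc #T * θ = #T • θ := (nsmul_eq_mul _ _).symm
    _ ≤ ∑ x ∈ T, (#(N x) : ℝ) := card_nsmul_le_sum _ _ _ fun x hx => hθ x (hTS hx)
    _ ≤ _ := by
      rw [Nat.cast_sum]
      refine sum_le_sum fun x hx => mod_cast card_le_card fun u hu => ?_
      exact mem_filter.2 ⟨mem_biUnion.2 ⟨x, hTS hx, hu⟩, hadj x (hTS hx) u hu⟩

theorem HasFewCherries.exists_injOn (h : HasFewCherries G W θ) {T : Finset V} {τ : V → V}
    {N : V → Finset V} (hT : T ⊆ W) (hτW : ∀ x ∈ T, τ x ∈ W) (hτ : Set.InjOn τ T)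
    (hne : ∀ x ∈ T, τ x ≠ x) (hN : ∀ x ∈ T, N x ⊆ Wᶜ) (hθ : ∀ x ∈ T, θ ≤ #(N x))
    (hadj : ∀ x ∈ T, ∀ u ∈ N x, G.Adj x u ∧ G.Adj (τ x) u) :
    ∃ g : V → V, Set.InjOn g T ∧ ∀ x ∈ T, g x ∈ N x := by
  obtain ⟨f, hf, hfN⟩ :=
    (all_card_le_biUnion_card_iff_exists_injective fun x : T => N x).1 fun S => by
      have hST : ∀ x ∈ S.image Subtype.val, x ∈ T := forall_mem_image.2 fun x _ => x.2
      have hall := h.card_le_card_biUnion (fun x hx => hT (hST x hx))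
        (fun x hx => hτW x (hST x hx)) (hτ.mono hST) (fun x hx => hne x (hST x hx))
        (fun x hx => hN x (hST x hx)) (fun x hx => hθ x (hST x hx))
        (fun x hx => hadj x (hST x hx))
      rwa [card_image_of_injective _ Subtype.val_injective, image_biUnion] at hall
  refine ⟨fun x => if hx : x ∈ T then f ⟨x, hx⟩ else x, fun x hx y hy hxy => ?_, fun x hx => ?_⟩
  · simpa only [dif_pos (mem_coe.1 hx), dif_pos (mem_coe.1 hy), hf.eq_iff, Subtype.mk.injEq]
      using hxy
  · simpa only [dif_pos hx] using hfN ⟨x, hx⟩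

theorem IsCrossSparse.lt_card_heavy (h : IsCrossSparse G W k m β) (hRG : ∀ a b, R a b → G.Adj a b)
    (hA : A ⊆ W) (hk : #A = k) (hd : ∀ a ∈ A, d ≤ #(Wᶜ.bipartiteAbove R a)) (ht : 0 ≤ t)
    (hβ : β + #Wᶜ * t ≤ k * d) : m < #{u ∈ Wᶜ | t ≤ #(A.bipartiteBelow R u)} := by
  by_contra! hle
  have hfew := h A hA hk _ (filter_subset _ _) hle
  have hsub : (#(Rel.interedges R A {u ∈ Wᶜ | t ≤ #(A.bipartiteBelow R u)}) : ℝ) ≤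
      #(Rel.interedges G.Adj A {u ∈ Wᶜ | t ≤ #(A.bipartiteBelow R u)}) :=
    mod_cast card_le_card (monotone_filter_right _ fun z _ => hRG z.1 z.2)
  have hmany : k * d ≤ ∑ a ∈ A, (#(Wᶜ.bipartiteAbove R a) : ℝ) := by
    rw [← hk, ← nsmul_eq_mul]
    exact card_nsmul_le_sum _ _ _ hd
  have := sum_card_bipartiteAbove_le_card_interedges_add R A Wᶜ ht
  linarith

/-- The graph joining vertices of the same color that have at least `θ` common `R`-neighbours in
`U`, the possible vertices to insert between them. -/
def connectorGraph (R : V → V → Prop) (col : V → ι) (U : Finset V) (θ : ℝ) : SimpleGraph V where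
  Adj x y := x ≠ y ∧ col x = col y ∧ θ ≤ #{u ∈ U | R x u ∧ R y u}
  symm := ⟨fun x y h => ⟨h.1.symm, h.2.1.symm, by simpa only [and_comm] using h.2.2⟩⟩

theorem IsCrossSparse.joinsBlocks (h : IsCrossSparse G W k m β)
    (hRG : ∀ a b, R a b → G.Adj a b) (hd : ∀ w ∈ W, d ≤ #(Wᶜ.bipartiteAbove R w)) (ht : 0 < t)
    (hβ : β + #Wᶜ * t ≤ k * d) (hμ : #Wᶜ + s * (s - 1) / 2 * μ < s * m)
    (hθ : k * k * θ ≤ μ * t ^ 2) (i : ι) :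
    JoinsBlocks (connectorGraph R col Wᶜ θ) k s {x ∈ W | col x = i} := by
  intro B hBZ hBk hdisj
  have hBW : ∀ i, B i ⊆ W := fun i => (hBZ i).trans (filter_subset _ _)
  obtain ⟨a, b, hab, hlt⟩ := exists_ne_lt_card_inter
    (X := fun i => {u ∈ Wᶜ | t ≤ #((B i).bipartiteBelow R u)}) (fun _ => filter_subset _ _)
    (fun i => (h.lt_card_heavy hRG (hBW i) (hBk i) (fun w hw => hd w (hBW i hw)) ht.le hβ).le) hμ
  rw [← filter_and] at hlt
  obtain ⟨x, hx, y, hy, hxy⟩ :=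
    exists_le_card_common_of_card_heavy R ht (by rwa [hBk, hBk]) hlt
  refine ⟨a, b, hab, x, hx, y, hy, fun h => ?_, ?_, hxy⟩
  · exact disjoint_left.1 (hdisj hab) hx (h ▸ hy)
  · rw [(mem_filter.1 (hBZ a hx)).2, (mem_filter.1 (hBZ b hy)).2]

end Connectors

section Cover

open Finset
open scoped Classical

variable {V ι : Type*} {G : SimpleGraph V} {c : Sym2 V → ι}
  {col : V → ι} {W : Finset V} {k s : ℕ} {m β t θ μ δ : ℝ}

/-- For every coloring of the edges of `G` with colors in `ι` there are at most `N` vertex-disjoint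
monochromatic cycles of `G` that cover all but at most `b` vertices of `W`. -/
def HasMonoCycleCover {V : Type*} (G : SimpleGraph V) (ι : Type*) (W : Finset V) (N : ℕ)
    (b : ℝ) : Prop :=
  ∀ c : Sym2 V → ι, ∃ 𝒞 : Finset (Set V), #𝒞 ≤ N ∧ (𝒞 : Set (Set V)).Pairwise Disjoint ∧
    (∀ S ∈ 𝒞, ∃ i, IsMonoCycle G c i S) ∧ ((W : Set V) \ ⋃₀ (𝒞 : Set (Set V))).ncard ≤ b

theorem HasMonoCycleCover.mono_right {N : ℕ} {b b' : ℝ} (h : HasMonoCycleCover G ι W N b)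
    (hb : b ≤ b') : HasMonoCycleCover G ι W N b' := fun c =>
  let ⟨𝒞, hN, hdisj, hmono, hcover⟩ := h c
  ⟨𝒞, hN, hdisj, hmono, hcover.trans hb⟩

theorem disjoint_flatMap_pair {L : List (List V)} (hL : L.flatten.Nodup) {g : V → V}
    (hg : Set.InjOn g {x | x ∈ L.flatten}) (hgL : ∀ x ∈ L.flatten, g x ∉ L.flatten)
    {l l' : List V} (hl : l ∈ L) (hl' : l' ∈ L) (hne : l ≠ l') :
    Disjoint {x | x ∈ l.flatMap fun x => [x, g x]} {x | x ∈ l'.flatMap fun x => [x, g x]} := by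
  have : Std.Symm (List.Disjoint (α := V)) := ⟨fun _ _ h => h.symm⟩
  have hdisj : l.Disjoint l' :=
    (List.nodup_flatten.1 hL).2.forall hl hl' hne
  have hmem : ∀ x ∈ l, x ∈ L.flatten := fun x hx => List.mem_flatten.2 ⟨l, hl, hx⟩
  have hmem' : ∀ x ∈ l', x ∈ L.flatten := fun x hx => List.mem_flatten.2 ⟨l', hl', hx⟩
  rw [Set.disjoint_left]
  intro x hx hx'
  simp only [Set.mem_ofPred_eq, mem_flatMap_pair, List.mem_map] at hx hx'
  obtain hx | ⟨y, hy, rfl⟩ := hx <;> obtain hx' | ⟨z, hz, hzy⟩ := hx'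
  · exact hdisj hx hx'
  · exact hgL z (hmem' z hz) (hzy ▸ hmem x hx)
  · exact hgL y (hmem y hy) (hmem' _ hx')
  · exact hdisj hy (hg (hmem' z hz) (hmem y hy) hzy ▸ hz)

theorem IsCycleFamily.two_le_length {H : SimpleGraph V} {L : List (List V)}
    (h : IsCycleFamily H W L) {l : List V} (hl : l ∈ L) : 2 ≤ l.length := by
  match l, h.ne_nil l hl, h.chain l hl with
  | [a], _, hc => exact absurd ((Cycle.chain_singleton _ _).1 hc) H.irrefl
  | _ :: _ :: _, _, _ => simp

variable [DecidableEq V]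

theorem IsCycleFamily.adj_prod_map_formPerm {H : SimpleGraph V} {L : List (List V)}
    (h : IsCycleFamily H W L) {l : List V} (hl : l ∈ L) {x : V} (hx : x ∈ l) :
    H.Adj x ((L.map List.formPerm).prod x) := by
  rw [prod_map_formPerm_apply h.nodup hl hx]
  exact (cycle_chain_iff_forall_formPerm ((List.nodup_flatten.1 h.nodup).1 l hl)).1
    (h.chain l hl) x hx

theorem isMonoCycle_flatMap_pair {l : List V} {g : V → V} (hl : l.Nodup) (hlen : 2 ≤ l.length)
    (hcol : Cycle.Chain (fun x y => col x = col y) (l : Cycle V))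
    (hg : Set.InjOn g {x | x ∈ l}) (hgl : ∀ x ∈ l, g x ∉ l)
    (hadj : ∀ x ∈ l, (colorClass G c (col x)).Adj x (g x))
    (hadj' : ∀ x ∈ l, (colorClass G c (col (l.formPerm x))).Adj (l.formPerm x) (g x)) :
    ∃ i, IsMonoCycle G c i {x | x ∈ l.flatMap fun x => [x, g x]} := by
  obtain ⟨a, ha⟩ := List.exists_mem_of_length_pos (by omega : 0 < l.length)
  have hcola : ∀ x ∈ l, col x = col a := fun x hx =>
    Cycle.chain_iff_pairwise.1 ((Cycle.chain_map (r := Eq) col).2 hcol)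
      _ (List.mem_map_of_mem hx) _ (List.mem_map_of_mem ha)
  refine ⟨col a, isMonoCycle_of_cycle_chain (nodup_flatMap_pair hl hg hgl)
    (by rw [length_flatMap_pair]; omega) (cycle_chain_flatMap (fun x hx => ?_) ?_)⟩
  · exact hcola x hx ▸ hadj x hx
  · refine (cycle_chain_iff_forall_formPerm hl).2 fun x hx => ?_
    rw [← hcola _ (List.formPerm_apply_mem_of_mem hx)]
    exact (hadj' x hx).symm

variable [Fintype V]

theorem exists_coloring_forall_le_card [Fintype ι] [Nonempty ι] (h : HasCrossDegree G W δ)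
    (c : Sym2 V → ι) :
    ∃ col : V → ι, ∀ w ∈ W, δ / Fintype.card ι ≤
      #(Wᶜ.bipartiteAbove (fun w u => (colorClass G c (col w)).Adj w u) w) := by
  have hcard : (0 : ℝ) < Fintype.card ι := mod_cast Fintype.card_pos
  have hmaj : ∀ w, ∃ i, w ∈ W → δ / Fintype.card ι ≤
      #(Wᶜ.bipartiteAbove (colorClass G c i).Adj w) := fun w => by
    by_cases hw : w ∈ W
    · obtain ⟨i, -, hi⟩ := exists_le_card_fiber_of_nsmul_le_card_of_maps_to
        (s := Wᶜ.bipartiteAbove G.Adj w) (t := univ) (f := fun u => c s(w, u))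
        (b := δ / Fintype.card ι) (fun _ _ => mem_univ _) univ_nonempty
        (by rw [card_univ, nsmul_eq_mul, mul_div_cancel₀ _ hcard.ne']; exact h w hw)
      refine ⟨i, fun _ => hi.trans_eq ?_⟩
      simp only [bipartiteAbove, filter_filter, colorClass_adj]
    · exact ⟨Classical.arbitrary ι, fun hw' => absurd hw' hw⟩
  choose col hcol using hmaj
  exact ⟨col, hcol⟩

theorem IsCycleFamily.exists_connectors {R : V → V → Prop} {L : List (List V)}
    (hL : IsCycleFamily (connectorGraph R col Wᶜ θ) W L) (hG : HasFewCherries G W θ)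
    (hRG : ∀ a b, R a b → G.Adj a b) :
    ∃ g : V → V, Set.InjOn g {x | x ∈ L.flatten} ∧ ∀ l ∈ L, ∀ x ∈ l,
      g x ∉ W ∧ R x (g x) ∧ R (l.formPerm x) (g x) := by
  set τ := (L.map List.formPerm).prod with hτ
  have hadj : ∀ x ∈ L.flatten.toFinset, (connectorGraph R col Wᶜ θ).Adj x (τ x) := fun x hx => by
    obtain ⟨l, hl, hxl⟩ := List.mem_flatten.1 (List.mem_toFinset.1 hx)
    exact hL.adj_prod_map_formPerm hl hxl
  have hτL : ∀ x ∈ L.flatten.toFinset, τ x ∈ W := fun x hx => by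
    obtain ⟨l, hl, hxl⟩ := List.mem_flatten.1 (List.mem_toFinset.1 hx)
    rw [hτ, prod_map_formPerm_apply hL.nodup hl hxl]
    exact hL.subset _ (List.mem_flatten.2 ⟨l, hl, List.formPerm_apply_mem_of_mem hxl⟩)
  obtain ⟨g, hg, hgN⟩ := hG.exists_injOn (T := L.flatten.toFinset) (τ := τ)
    (N := fun x => {u ∈ Wᶜ | R x u ∧ R (τ x) u}) (fun x hx => hL.subset x (List.mem_toFinset.1 hx))
    hτL τ.injective.injOn (fun x hx => (hadj x hx).1.symm) (fun _ _ => filter_subset _ _)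
    (fun x hx => (hadj x hx).2.2)
    (fun x _ u hu => (mem_filter.1 hu).2.imp (hRG _ _) (hRG _ _))
  refine ⟨g, by simpa only [List.coe_toFinset] using hg, fun l hl x hx => ?_⟩
  obtain ⟨hgW, hgx, hgτ⟩ := mem_filter.1 <|
    hgN x (List.mem_toFinset.2 (List.mem_flatten.2 ⟨l, hl, hx⟩))
  rw [hτ, prod_map_formPerm_apply hL.nodup hl hx] at hgτ
  exact ⟨mem_compl.1 hgW, hgx, hgτ⟩

theorem IsCycleFamily.exists_monoCycles {L : List (List V)}
    (hL : IsCycleFamily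
      (connectorGraph (fun w u => (colorClass G c (col w)).Adj w u) col Wᶜ θ) W L)
    (hG : HasFewCherries G W θ) :
    ∃ 𝒞 : Finset (Set V), #𝒞 ≤ L.length ∧ (𝒞 : Set (Set V)).Pairwise Disjoint ∧
      (∀ S ∈ 𝒞, ∃ i, IsMonoCycle G c i S) ∧ ∀ x ∈ L.flatten, x ∈ ⋃₀ (𝒞 : Set (Set V)) := by
  obtain ⟨g, hg, hgR⟩ := hL.exists_connectors hG fun a b h => (colorClass_adj.1 h).1
  have hgL : ∀ x ∈ L.flatten, g x ∉ L.flatten := fun x hx hgx => by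
    obtain ⟨l, hl, hxl⟩ := List.mem_flatten.1 hx
    exact (hgR l hl x hxl).1 (hL.subset _ hgx)
  refine ⟨(L.map fun l => {x | x ∈ l.flatMap fun x => [x, g x]}).toFinset,
    (List.toFinset_card_le _).trans_eq (List.length_map _), ?_, ?_, fun x hx => ?_⟩
  · intro S hS S' hS' hne
    simp only [List.coe_toFinset, List.mem_map, Set.mem_ofPred_eq] at hS hS'
    obtain ⟨l, hl, rfl⟩ := hS
    obtain ⟨l', hl', rfl⟩ := hS'
    exact disjoint_flatMap_pair hL.nodup hg hgL hl hl' fun h => hne (by rw [h])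
  · intro S hS
    obtain ⟨l, hl, rfl⟩ := List.mem_map.1 (List.mem_toFinset.1 hS)
    have hmem : ∀ x ∈ l, x ∈ L.flatten := fun x hx => List.mem_flatten.2 ⟨l, hl, hx⟩
    exact isMonoCycle_flatMap_pair ((List.nodup_flatten.1 hL.nodup).1 l hl)
      (hL.two_le_length hl) ((hL.chain l hl).imp fun _ _ h => h.2.1) (hg.mono hmem)
      (fun x hx hgx => hgL x (hmem x hx) (hmem _ hgx)) (fun x hx => (hgR l hl x hx).2.1)
      (fun x hx => (hgR l hl x hx).2.2)
  · obtain ⟨l, hl, hxl⟩ := List.mem_flatten.1 hx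
    exact ⟨_, List.mem_toFinset.2 (List.mem_map_of_mem hl), mem_flatMap_pair.2 (.inl hxl)⟩

theorem HasCrossDegree.hasMonoCycleCover [Fintype ι] [Nonempty ι] (hdeg : HasCrossDegree G W δ)
    (hsparse : IsCrossSparse G W k m β) (hcherry : HasFewCherries G W θ) (hk : 0 < k)
    (ht : 0 < t) (hβ : β + #Wᶜ * t ≤ k * (δ / Fintype.card ι))
    (hμ : #Wᶜ + s * (s - 1) / 2 * μ < s * m) (hθ : k * k * θ ≤ μ * t ^ 2) :
    HasMonoCycleCover G ι W (Fintype.card ι * s) (Fintype.card ι * (2 * k * s)) := by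
  intro c
  obtain ⟨col, hcol⟩ := exists_coloring_forall_le_card hdeg c
  obtain ⟨L, hlen, hL, hcard⟩ := exists_isCycleFamily_of_fibers col hk
    (hsparse.joinsBlocks (fun _ _ h => (colorClass_adj.1 h).1) hcol ht hβ hμ hθ) univ
  simp only [mem_univ, filter_true, card_univ] at hlen hL hcard
  obtain ⟨𝒞, h𝒞, hdisj, hmono, hcover⟩ := hL.exists_monoCycles hcherry
  refine ⟨𝒞, h𝒞.trans hlen, hdisj, hmono, le_trans ?_ (Nat.cast_le.2 hcard |>.trans_eq ?_)⟩
  · rw [← Set.ncard_coe_finset, coe_sdiff, List.coe_toFinset]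
    exact mod_cast Set.ncard_le_ncard
      (Set.sdiff_subset_sdiff_right hcover) ((finite_toSet W).sdiff)
  · push_cast
    ring

/-- The numerical parameters are chosen as follows: `s = 3r` blocks, a vertex is heavy for a block
if it has `t = 0.09kq/r` neighbours in it, and more than `μ = n/(60r²)` vertices are heavy for both
of some two blocks. -/
theorem HasCrossDegree.hasMonoCycleCover_card [Fintype ι] [Nonempty ι] {n r q : ℝ}
    (hn : n = Fintype.card V) (hn0 : 0 < n) (hr : r = Fintype.card ι) (hq : 0 < q) (hk : 0 < k)
    (hdeg : HasCrossDegree G W (0.69 * n * q))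
    (hsparse : IsCrossSparse G W k (0.4 * n / r) (3 / 2 * k * (0.4 * n / r) * q))
    (hcherry : HasFewCherries G W (n * q ^ 2 / (10 ^ 4 * r ^ 4))) :
    HasMonoCycleCover G ι W (3 * Fintype.card ι ^ 2) (6 * r ^ 2 * k) := by
  have hr1 : 1 ≤ r := by rw [hr]; exact mod_cast Fintype.card_pos
  have : 0 < r := by linarith
  have : (0 : ℝ) < k := mod_cast hk
  have hcard : (#Wᶜ : ℝ) ≤ n := by rw [hn]; exact mod_cast card_le_univ _
  have hcover := hdeg.hasMonoCycleCover (ι := ι) (s := 3 * Fintype.card ι)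
    (μ := n / (60 * r ^ 2)) (t := 0.09 * k * q / r) hsparse hcherry hk (by positivity) ?_ ?_ ?_
  · convert hcover using 1
    · ring
    · push_cast
      rw [← hr]
      ring
  · calc 3 / 2 * k * (0.4 * n / r) * q + #Wᶜ * (0.09 * k * q / r)
        ≤ 3 / 2 * k * (0.4 * n / r) * q + n * (0.09 * k * q / r) := by gcongr
      _ = k * (0.69 * n * q / Fintype.card ι) := by rw [← hr]; ring
  · push_cast
    rw [← hr]
    calc #Wᶜ + 3 * r * (3 * r - 1) / 2 * (n / (60 * r ^ 2))
        ≤ n + 3 * r * (3 * r) / 2 * (n / (60 * r ^ 2)) := by gcongr; linarith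
      _ = 1.075 * n := by field_simp; norm_num
      _ < 1.2 * n := by gcongr; norm_num
      _ = 3 * r * (0.4 * n / r) := by field_simp; norm_num
  · calc k * k * (n * q ^ 2 / (10 ^ 4 * r ^ 4)) = n * k ^ 2 * q ^ 2 / r ^ 4 * 0.0001 := by ring
      _ ≤ n * k ^ 2 * q ^ 2 / r ^ 4 * 0.000135 := by gcongr; norm_num
      _ = n / (60 * r ^ 2) * (0.09 * k * q / r) ^ 2 := by ring

end Cover

section OpenBlocks

open Finset ProbabilityTheory

variable {E ι : Type*} {q : ℝ}

/-- The number of indices `i ∈ S` for which all points of the block `F i` are open in `ω`. -/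
def openCount (S : Finset ι) (F : ι → Finset E) (ω : E → Bool) : ℕ :=
  #{i ∈ S | ∀ e ∈ F i, ω e = true}

theorem card_filter_eq_openCount {S : Finset ι} {F : ι → Finset E} {ω : E → Bool} {P : ι → Prop}
    [DecidablePred P] (h : ∀ i ∈ S, P i ↔ ∀ e ∈ F i, ω e = true) :
    #{i ∈ S | P i} = openCount S F ω :=
  congrArg Finset.card (filter_congr h)

theorem exp_mul_openCount [DecidableEq E] (S : Finset ι) (F : ι → Finset E) (ω : E → Bool)
    (t : ℝ) :
    Real.exp (t * openCount S F ω) = ∑ T ∈ S.powerset,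
      (Real.exp t - 1) ^ #T * {ω : E → Bool | ∀ e ∈ T.biUnion F, ω e = true}.indicator 1 ω := by
  have hprod : Real.exp (t * openCount S F ω) =
      ∏ i ∈ S, (1 + (Real.exp t - 1) * if ∀ e ∈ F i, ω e = true then 1 else 0) := by
    rw [mul_comm, Real.exp_nat_mul, openCount, ← prod_const, prod_filter]
    exact prod_congr rfl fun i _ => by split_ifs <;> ring
  rw [hprod, prod_one_add]
  refine sum_congr rfl fun T _ => ?_
  rw [prod_mul_distrib, prod_const, prod_ite_zero, prod_const_one, Set.indicator_apply]
  have hopen : (∀ i ∈ T, ∀ e ∈ F i, ω e = true) ↔ ∀ e ∈ T.biUnion F, ω e = true := by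
    simp only [mem_biUnion]
    exact ⟨fun h e ⟨i, hi, he⟩ => h i hi e he, fun h i hi e he => h e ⟨i, hi, he⟩⟩
  simp only [Set.mem_ofPred_eq, hopen, Pi.one_apply]

variable [Fintype E]

/-- The product measure on `E → Bool` under which every point of `E` is open (has value `true`)
independently with probability `q`; thus `gnp n q` is `bernoulliPi (Sym2 (Fin n)) q`. -/
noncomputable def bernoulliPi (E : Type*) [Fintype E] (q : ℝ) : Measure (E → Bool) :=
  Measure.pi fun _ => bernoulliM q

theorem isProbabilityMeasure_bernoulliM (hq : q ∈ Set.Icc 0 1) :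
    IsProbabilityMeasure (bernoulliM q) := by
  constructor
  simp only [bernoulliM, Measure.add_apply, Measure.smul_apply, measure_univ, smul_eq_mul, mul_one]
  rw [← ENNReal.ofReal_add hq.1 (sub_nonneg.2 hq.2), add_sub_cancel, ENNReal.ofReal_one]

theorem isProbabilityMeasure_bernoulliPi (hq : q ∈ Set.Icc 0 1) :
    IsProbabilityMeasure (bernoulliPi E q) := by
  have := isProbabilityMeasure_bernoulliM hq
  unfold bernoulliPi
  infer_instance

theorem bernoulliPi_real_forall_eq_true (hq : q ∈ Set.Icc 0 1) (F : Finset E) :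
    (bernoulliPi E q).real {ω | ∀ e ∈ F, ω e = true} = q ^ #F := by
  have := isProbabilityMeasure_bernoulliM hq
  have hpi : {ω : E → Bool | ∀ e ∈ F, ω e = true} = (F : Set E).pi fun _ => {true} := by
    ext ω
    simp [Set.mem_pi]
  have htrue : bernoulliM q {true} = ENNReal.ofReal q := by simp [bernoulliM]
  rw [hpi, bernoulliPi, measureReal_def, Measure.pi_pi_finset, prod_const, htrue,
    ENNReal.toReal_pow, ENNReal.toReal_ofReal hq.1]

theorem mgf_openCount (hq : q ∈ Set.Icc 0 1) {S : Finset ι} {F : ι → Finset E}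
    (hF : (S : Set ι).PairwiseDisjoint F) (t : ℝ) :
    mgf (fun ω => (openCount S F ω : ℝ)) (bernoulliPi E q) t =
      ∏ i ∈ S, (1 + (Real.exp t - 1) * q ^ #(F i)) := by
  classical
  have := isProbabilityMeasure_bernoulliPi (E := E) hq
  simp only [mgf, exp_mul_openCount]
  rw [integral_finsetSum _ fun _ _ => Integrable.of_finite, prod_one_add]
  refine sum_congr rfl fun T hT => ?_
  rw [integral_const_mul, integral_indicator_one (Set.toFinite _).measurableSet,
    bernoulliPi_real_forall_eq_true hq, card_biUnion (hF.subset (mem_powerset.1 hT)),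
    prod_mul_distrib, prod_const, prod_pow_eq_pow_sum]

theorem mgf_openCount_le (hq : q ∈ Set.Icc 0 1) {S : Finset ι} {F : ι → Finset E}
    (hF : (S : Set ι).PairwiseDisjoint F) (t : ℝ) :
    mgf (fun ω => (openCount S F ω : ℝ)) (bernoulliPi E q) t ≤
      Real.exp ((Real.exp t - 1) * ∑ i ∈ S, q ^ #(F i)) := by
  rw [mgf_openCount hq hF, mul_sum, Real.exp_sum]
  refine prod_le_prod (fun i _ => ?_) fun i _ => by
    rw [add_comm]
    exact Real.add_one_le_exp _
  have h0 : 0 ≤ q ^ #(F i) := pow_nonneg hq.1 _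
  have h1 : q ^ #(F i) ≤ 1 := pow_le_one₀ hq.1 hq.2
  nlinarith [Real.exp_pos t]

theorem bernoulliPi_real_le_openCount_le (hq : q ∈ Set.Icc 0 1) {S : Finset ι}
    {F : ι → Finset E} (hF : (S : Set ι).PairwiseDisjoint F) (a : ℝ) :
    (bernoulliPi E q).real {ω | a ≤ openCount S F ω} ≤
      Real.exp (∑ i ∈ S, q ^ #(F i) - a * Real.log 2) := by
  have := isProbabilityMeasure_bernoulliPi (E := E) hq
  have hmgf := mgf_openCount_le hq hF (Real.log 2)
  rw [Real.exp_log two_pos] at hmgf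
  calc (bernoulliPi E q).real {ω | a ≤ openCount S F ω}
      ≤ Real.exp (-Real.log 2 * a) * mgf (fun ω => (openCount S F ω : ℝ)) _ (Real.log 2) :=
        measure_ge_le_exp_mul_mgf a (Real.log_nonneg one_le_two) Integrable.of_finite
    _ ≤ Real.exp (-Real.log 2 * a) * Real.exp ((2 - 1) * ∑ i ∈ S, q ^ #(F i)) := by gcongr
    _ = Real.exp (∑ i ∈ S, q ^ #(F i) - a * Real.log 2) := by
      rw [← Real.exp_add]
      ring_nf

theorem bernoulliPi_real_openCount_le_le (hq : q ∈ Set.Icc 0 1) {S : Finset ι}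
    {F : ι → Finset E} (hF : (S : Set ι).PairwiseDisjoint F) (a : ℝ) :
    (bernoulliPi E q).real {ω | openCount S F ω ≤ a} ≤
      Real.exp (a * Real.log 2 - (∑ i ∈ S, q ^ #(F i)) / 2) := by
  have := isProbabilityMeasure_bernoulliPi (E := E) hq
  have hmgf := mgf_openCount_le hq hF (-Real.log 2)
  rw [Real.exp_neg, Real.exp_log two_pos] at hmgf
  calc (bernoulliPi E q).real {ω | openCount S F ω ≤ a}
      ≤ Real.exp (-(-Real.log 2) * a) *
          mgf (fun ω => (openCount S F ω : ℝ)) _ (-Real.log 2) :=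
        measure_le_le_exp_mul_mgf a (neg_nonpos.2 (Real.log_nonneg one_le_two))
          Integrable.of_finite
    _ ≤ Real.exp (-(-Real.log 2) * a) * Real.exp ((2⁻¹ - 1) * ∑ i ∈ S, q ^ #(F i)) := by gcongr
    _ = Real.exp (a * Real.log 2 - (∑ i ∈ S, q ^ #(F i)) / 2) := by
      rw [← Real.exp_add]
      ring_nf

theorem measureReal_not_le_sum {Ω α : Type*} [Fintype α] [MeasurableSpace Ω] {μ : Measure Ω}
    [IsFiniteMeasure μ] {P : Ω → Prop} {C : α → Prop} {f : α → Set Ω} {g : α → ℝ}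
    (hg : ∀ a, 0 ≤ g a) (hf : ∀ a, C a → μ.real (f a) ≤ g a)
    (hP : ∀ ω, (∀ a, C a → ω ∉ f a) → P ω) : μ.real {ω | ¬ P ω} ≤ ∑ a, g a := by
  classical
  have hsub : {ω | ¬ P ω} ⊆ ⋃ a ∈ ({a | C a} : Finset α), f a := fun ω hω => by
    by_contra hnot
    simp only [mem_filter, mem_univ, true_and, Set.mem_iUnion, not_exists] at hnot
    exact hω (hP ω hnot)
  calc μ.real {ω | ¬ P ω} ≤ ∑ a with C a, μ.real (f a) :=
        (measureReal_mono hsub (measure_ne_top _ _)).trans (measureReal_biUnion_finset_le _ _)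
    _ ≤ ∑ a with C a, g a := sum_le_sum fun a ha => hf a (mem_filter.1 ha).2
    _ ≤ ∑ a, g a := sum_le_univ_sum_of_nonneg hg

end OpenBlocks

section RandomGraph

open Finset
open scoped Classical

variable {n k : ℕ} {W A X : Finset (Fin n)} {Q : Finset (Fin n × Fin n)} {q β δ θ m : ℝ}
  {ω : Sym2 (Fin n) → Bool}

theorem graphOf_adj {u v : Fin n} (h : u ≠ v) : (graphOf ω).Adj u v ↔ ω s(u, v) = true := by
  simp [graphOf, h, Sym2.eq_swap (a := v)]

theorem eq_and_eq_of_sym2_mk_eq {a b u v : Fin n} (ha : a ∈ W) (hv : v ∈ Wᶜ)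
    (h : s(a, u) = s(b, v)) : a = b ∧ u = v :=
  (Sym2.eq_iff.1 h).resolve_right fun h' => mem_compl.1 hv (h'.1 ▸ ha)

theorem gnp_real_card_bipartiteAbove_le_le (hq : q ∈ Set.Icc 0 1) {w : Fin n} (hw : w ∈ W) :
    (gnp n q).real {ω | (#(Wᶜ.bipartiteAbove (graphOf ω).Adj w) : ℝ) ≤ δ} ≤
      Real.exp (δ * Real.log 2 - #Wᶜ * q / 2) := by
  have hcount : ∀ ω : Sym2 (Fin n) → Bool, #(Wᶜ.bipartiteAbove (graphOf ω).Adj w) =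
      openCount Wᶜ (fun u => {s(w, u)}) ω := fun ω =>
    card_filter_eq_openCount fun u hu => by
      simp only [mem_singleton, forall_eq,
        graphOf_adj (ne_of_mem_of_not_mem hw (mem_compl.1 hu))]
  have hdisj : ((Wᶜ : Finset (Fin n)) : Set (Fin n)).PairwiseDisjoint
      fun u => ({s(w, u)} : Finset (Sym2 (Fin n))) := fun u _ v hv huv =>
    disjoint_singleton.2 fun h => huv (eq_and_eq_of_sym2_mk_eq hw hv h).2
  simp only [hcount]
  refine (bernoulliPi_real_openCount_le_le hq hdisj δ).trans_eq ?_
  simp only [card_singleton, pow_one, sum_const, nsmul_eq_mul]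

theorem gnp_real_le_card_interedges_le (hq : q ∈ Set.Icc 0 1) (hA : A ⊆ W) (hX : X ⊆ Wᶜ) :
    (gnp n q).real {ω | β ≤ #(Rel.interedges (graphOf ω).Adj A X)} ≤
      Real.exp (#A * #X * q - β * Real.log 2) := by
  have hcount : ∀ ω : Sym2 (Fin n) → Bool, #(Rel.interedges (graphOf ω).Adj A X) =
      openCount (A ×ˢ X) (fun z => {s(z.1, z.2)}) ω := fun ω =>
    card_filter_eq_openCount fun z hz => by
      obtain ⟨hzA, hzX⟩ := mem_product.1 hz
      simp only [mem_singleton, forall_eq,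
        graphOf_adj (ne_of_mem_of_not_mem (hA hzA) (mem_compl.1 (hX hzX)))]
  have hdisj : ((A ×ˢ X : Finset (Fin n × Fin n)) : Set (Fin n × Fin n)).PairwiseDisjoint
      fun z => ({s(z.1, z.2)} : Finset (Sym2 (Fin n))) := fun z hz z' hz' hne => by
    rw [mem_coe, mem_product] at hz hz'
    refine disjoint_singleton.2 fun h => hne ?_
    exact Prod.ext_iff.2 (eq_and_eq_of_sym2_mk_eq (hA hz.1) (hX hz'.2) h)
  simp only [hcount]
  refine (bernoulliPi_real_le_openCount_le hq hdisj β).trans_eq ?_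
  simp only [card_singleton, pow_one, sum_const, nsmul_eq_mul, card_product, Nat.cast_mul]

theorem IsMatchingOn.eq_of_sym2_mk_eq (hQ : IsMatchingOn W Q) {z z' : Fin n × Fin n}
    (hz : z ∈ Q) (hz' : z' ∈ Q) {u v : Fin n} (hv : v ∈ Wᶜ) {e : Sym2 (Fin n)}
    (he : e = s(z.1, u) ∨ e = s(z.2, u)) (he' : e = s(z'.1, v) ∨ e = s(z'.2, v)) :
    z = z' ∧ u = v := by
  obtain ⟨h1, h2⟩ := mem_product.1 (hQ.subset hz)
  rcases he with rfl | rfl <;> rcases he' with h | h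
  · exact (eq_and_eq_of_sym2_mk_eq h1 hv h).imp_left (hQ.injOn_fst hz hz')
  · exact absurd (eq_and_eq_of_sym2_mk_eq h1 hv h).1 (hQ.fst_ne_snd z hz z' hz')
  · exact absurd (eq_and_eq_of_sym2_mk_eq h2 hv h).1.symm (hQ.fst_ne_snd z' hz' z hz)
  · exact (eq_and_eq_of_sym2_mk_eq h2 hv h).imp_left (hQ.injOn_snd hz hz')

theorem gnp_real_le_card_interedges_cherry_le (hq : q ∈ Set.Icc 0 1) (hQ : IsMatchingOn W Q)
    (hX : X ⊆ Wᶜ) :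
    (gnp n q).real {ω | β ≤ #(Rel.interedges
        (fun z u => (graphOf ω).Adj z.1 u ∧ (graphOf ω).Adj z.2 u) Q X)} ≤
      Real.exp (#Q * #X * q ^ 2 - β * Real.log 2) := by
  have hcount : ∀ ω : Sym2 (Fin n) → Bool,
      #(Rel.interedges (fun z u => (graphOf ω).Adj z.1 u ∧ (graphOf ω).Adj z.2 u) Q X) =
        openCount (Q ×ˢ X) (fun z => {s(z.1.1, z.2), s(z.1.2, z.2)}) ω := fun ω =>
    card_filter_eq_openCount fun z hz => by
      obtain ⟨hzQ, hzX⟩ := mem_product.1 hz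
      obtain ⟨h1, h2⟩ := mem_product.1 (hQ.subset hzQ)
      have hu := mem_compl.1 (hX hzX)
      simp only [mem_insert, mem_singleton, forall_eq_or_imp, forall_eq,
        graphOf_adj (ne_of_mem_of_not_mem h1 hu), graphOf_adj (ne_of_mem_of_not_mem h2 hu)]
  have hdisj : ((Q ×ˢ X : Finset _) : Set ((Fin n × Fin n) × Fin n)).PairwiseDisjoint
      fun z => ({s(z.1.1, z.2), s(z.1.2, z.2)} : Finset (Sym2 (Fin n))) := fun z hz z' hz' hne => by
    rw [mem_coe, mem_product] at hz hz'
    refine disjoint_left.2 fun e he he' => hne ?_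
    rw [mem_insert, mem_singleton] at he he'
    exact Prod.ext_iff.2 (hQ.eq_of_sym2_mk_eq hz.1 hz'.1 (hX hz'.2) he he')
  have hcard : ∀ z ∈ Q ×ˢ X, q ^ #({s(z.1.1, z.2), s(z.1.2, z.2)} : Finset _) = q ^ 2 :=
    fun z hz => by
      obtain ⟨hzQ, hzX⟩ := mem_product.1 hz
      rw [card_pair fun h => hQ.fst_ne_snd _ hzQ _ hzQ
        (eq_and_eq_of_sym2_mk_eq (mem_product.1 (hQ.subset hzQ)).1 (hX hzX) h).1]
  simp only [hcount]
  refine (bernoulliPi_real_le_openCount_le hq hdisj β).trans_eq ?_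
  rw [sum_congr rfl hcard]
  simp only [sum_const, nsmul_eq_mul, card_product, Nat.cast_mul]

theorem gnp_real_not_hasCrossDegree_le (hq : q ∈ Set.Icc 0 1) (hW : (#W : ℝ) ≤ n / 100)
    (hnq : 200 * Real.log n ≤ n * q) (hn : 0 < n) :
    (gnp n q).real {ω | ¬ HasCrossDegree (graphOf ω) W (0.69 * n * q)} ≤ 1 / n := by
  have : IsProbabilityMeasure (gnp n q) := isProbabilityMeasure_bernoulliPi hq
  have hexp : ∀ w ∈ W, (gnp n q).real
      {ω | (#(Wᶜ.bipartiteAbove (graphOf ω).Adj w) : ℝ) ≤ 0.69 * n * q} ≤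
        Real.exp (-(2 * Real.log n)) := fun w hw => by
    refine (gnp_real_card_bipartiteAbove_le_le hq hw).trans (Real.exp_le_exp.2 ?_)
    have hnq0 : 0 ≤ n * q := mul_nonneg n.cast_nonneg hq.1
    have hlog : n * q * Real.log 2 ≤ n * q * 0.694 := by
      gcongr
      linarith [Real.log_two_lt_d9]
    have hcompl : 0.99 * n * q ≤ #Wᶜ * q := by
      refine mul_le_mul_of_nonneg_right ?_ hq.1
      rw [card_compl, Fintype.card_fin, Nat.cast_sub (card_finset_fin_le W)]
      linarith
    linarith
  calc (gnp n q).real {ω | ¬ HasCrossDegree (graphOf ω) W (0.69 * n * q)}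
      ≤ ∑ _ : Fin n, Real.exp (-(2 * Real.log n)) :=
        measureReal_not_le_sum (fun _ => (Real.exp_pos _).le) hexp fun ω h w hw =>
          (not_le.1 (h w hw)).le
    _ = 1 / n := by
      have hn0 : (0 : ℝ) < n := mod_cast hn
      rw [sum_const, card_univ, Fintype.card_fin, nsmul_eq_mul, Real.exp_neg, two_mul,
        Real.exp_add, Real.exp_log hn0]
      field_simp

theorem gnp_real_not_isCrossSparse_le (hq : q ∈ Set.Icc 0 1) (hkm : 80 * n ≤ k * m * q)
    (hn : 0 < n) :
    (gnp n q).real {ω | ¬ IsCrossSparse (graphOf ω) W k m (3 / 2 * k * m * q)} ≤ 1 / n := by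
  have : IsProbabilityMeasure (gnp n q) := isProbabilityMeasure_bernoulliPi hq
  have hexp : ∀ z : Finset (Fin n) × Finset (Fin n),
      z.1 ⊆ W ∧ #z.1 = k ∧ z.2 ⊆ Wᶜ ∧ (#z.2 : ℝ) ≤ m →
      (gnp n q).real {ω | 3 / 2 * k * m * q ≤ #(Rel.interedges (graphOf ω).Adj z.1 z.2)} ≤
        Real.exp (-(3 * n)) := fun ⟨A, X⟩ ⟨hA, hAk, hX, hXm⟩ => by
    refine (gnp_real_le_card_interedges_le hq hA hX).trans (Real.exp_le_exp.2 ?_)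
    have hsize : #A * #X * q ≤ k * m * q := by
      rw [hAk]
      exact mul_le_mul_of_nonneg_right (by gcongr) hq.1
    nlinarith [Real.log_two_gt_d9]
  calc (gnp n q).real {ω | ¬ IsCrossSparse (graphOf ω) W k m (3 / 2 * k * m * q)}
      ≤ ∑ _ : Finset (Fin n) × Finset (Fin n), Real.exp (-(3 * n)) :=
        measureReal_not_le_sum (fun _ => (Real.exp_pos _).le) hexp fun ω h A hA hAk X hX hXm =>
            not_le.1 (h (A, X) ⟨hA, hAk, hX, hXm⟩)
    _ = 2 ^ n * 2 ^ n * Real.exp (-(3 * n)) := by simp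
    _ ≤ Real.exp 1 ^ n * Real.exp 1 ^ n * Real.exp (-(3 * n)) := by
      gcongr <;> linarith [Real.add_one_le_exp 1]
    _ = Real.exp (-n) := by
      rw [← Real.exp_nat_mul, ← Real.exp_add, ← Real.exp_add]
      ring_nf
    _ ≤ 1 / n := by
      rw [Real.exp_neg, one_div]
      exact inv_anti₀ (mod_cast hn) (by linarith [Real.add_one_le_exp (n : ℝ)])

theorem sum_pow_card_le_exp {α : Type*} [Fintype α] {x : ℝ} (hx : 0 ≤ x) :
    ∑ s : Finset α, x ^ #s ≤ Real.exp (Fintype.card α * x) := by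
  have hsum := Fintype.sum_pow_mul_eq_add_pow α x 1
  simp only [one_pow, mul_one] at hsum
  rw [hsum, Real.exp_nat_mul]
  gcongr
  exact Real.add_one_le_exp x

theorem sum_inv_pow_card_mul_inv_pow_card_le (hn : 0 < n) :
    ∑ z : Finset (Fin n × Fin n) × Finset (Fin n),
      (n : ℝ)⁻¹ * (((n : ℝ) ^ 3)⁻¹ ^ #z.1 * ((n : ℝ) ^ 2)⁻¹ ^ #z.2) ≤ Real.exp 2 / n := by
  have hn1 : (n : ℝ)⁻¹ ≤ 1 := inv_le_one_of_one_le₀ (mod_cast hn)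
  have hn0 : (0 : ℝ) < n := mod_cast hn
  have hpairs : ∑ Q : Finset (Fin n × Fin n), ((n : ℝ) ^ 3)⁻¹ ^ #Q ≤ Real.exp 1 := by
    refine (sum_pow_card_le_exp (by positivity)).trans (Real.exp_le_exp.2 (hn1.trans' ?_))
    rw [Fintype.card_prod, Fintype.card_fin, Nat.cast_mul]
    field_simp
    rfl
  have hsets : ∑ X : Finset (Fin n), ((n : ℝ) ^ 2)⁻¹ ^ #X ≤ Real.exp 1 := by
    refine (sum_pow_card_le_exp (by positivity)).trans (Real.exp_le_exp.2 (hn1.trans' ?_))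
    rw [Fintype.card_fin]
    field_simp
    rfl
  rw [← mul_sum, Fintype.sum_prod_type]
  simp only [← mul_sum]
  rw [← sum_mul]
  calc _ ≤ (n : ℝ)⁻¹ * (Real.exp 1 * Real.exp 1) := by gcongr
    _ = Real.exp 2 / n := by
      rw [← Real.exp_add, one_add_one_eq_two, div_eq_inv_mul]

theorem gnp_real_le_card_interedges_cherry_le_inv (hq : q ∈ Set.Icc 0 1)
    (hWθ : 18 * #W * q ^ 2 ≤ θ) (hθ : 20 * Real.log n ≤ θ) (hn : 0 < n) (hQ : IsMatchingOn W Q)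
    (hQ0 : Q.Nonempty) (hX : X ⊆ Wᶜ) (hXQ : #X ≤ 3 * #Q) :
    (gnp n q).real {ω | #Q * θ ≤ #(Rel.interedges
        (fun z u => (graphOf ω).Adj z.1 u ∧ (graphOf ω).Adj z.2 u) Q X)} ≤
      (n : ℝ)⁻¹ * (((n : ℝ) ^ 3)⁻¹ ^ #Q * ((n : ℝ) ^ 2)⁻¹ ^ #X) := by
  have hrhs : (n : ℝ)⁻¹ * (((n : ℝ) ^ 3)⁻¹ ^ #Q * ((n : ℝ) ^ 2)⁻¹ ^ #X) =
      Real.exp (-((1 + 3 * #Q + 2 * #X : ℕ) * Real.log n)) := by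
    rw [Real.exp_neg, Real.exp_nat_mul, Real.exp_log (mod_cast hn)]
    simp only [pow_add, pow_mul, mul_inv, inv_pow, pow_one, mul_assoc]
  rw [hrhs]
  refine (gnp_real_le_card_interedges_cherry_le hq hQ hX).trans (Real.exp_le_exp.2 ?_)
  have hQW : (#Q : ℝ) ≤ #W := mod_cast
    card_le_card_of_injOn _ (fun z hz => (mem_product.1 (hQ.subset hz)).1) hQ.injOn_fst
  have hQ1 : (1 : ℝ) ≤ #Q := mod_cast hQ0.card_pos
  have hXQ' : (#X : ℝ) ≤ 3 * #Q := mod_cast hXQ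
  have hmean : #Q * #X * q ^ 2 ≤ #Q * (θ / 6) := by
    rw [mul_assoc]
    gcongr
    nlinarith [sq_nonneg q]
  have hlog : #Q * (20 * Real.log n) ≤ #Q * θ := by gcongr
  have hlog0 : 0 ≤ Real.log n := Real.log_natCast_nonneg n
  have hweight : ((1 + 3 * #Q + 2 * #X : ℕ) : ℝ) * Real.log n ≤ 10 * #Q * Real.log n := by
    push_cast
    gcongr
    linarith
  have hlog2 : #Q * θ * 0.693 ≤ #Q * θ * Real.log 2 :=
    mul_le_mul_of_nonneg_left (by linarith [Real.log_two_gt_d9]) (by nlinarith)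
  nlinarith

theorem gnp_real_not_hasFewCherries_le (hq : q ∈ Set.Icc 0 1)
    (hWθ : 18 * #W * q ^ 2 ≤ θ) (hθ : 20 * Real.log n ≤ θ) (hn : 0 < n) :
    (gnp n q).real {ω | ¬ HasFewCherries (graphOf ω) W θ} ≤ Real.exp 2 / n := by
  have : IsProbabilityMeasure (gnp n q) := isProbabilityMeasure_bernoulliPi hq
  exact (measureReal_not_le_sum (C := fun z : Finset (Fin n × Fin n) × Finset (Fin n) =>
      IsMatchingOn W z.1 ∧ z.1.Nonempty ∧ z.2 ⊆ Wᶜ ∧ #z.2 ≤ 3 * #z.1)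
    (fun _ => by positivity)
    (fun z ⟨hQ, hQ0, hX, hXQ⟩ =>
      gnp_real_le_card_interedges_cherry_le_inv hq hWθ hθ hn hQ hQ0 hX hXQ)
    fun ω h Q hQ hQ0 X hX hXQ => not_le.1 (h (Q, X) ⟨hQ, hQ0, hX, hXQ⟩)).trans
      (sum_inv_pow_card_mul_inv_pow_card_le hn)

theorem gnp_real_not_hasMonoCycleCover_card_le_add {r : ℕ} (hr : 0 < r) (hn : 0 < n)
    (hq : q ∈ Set.Icc 0 1) (hkq : 0 < k * q) :
    (gnp n q).real {ω | ¬ HasMonoCycleCover (graphOf ω) (Fin r) W (3 * r ^ 2) (6 * r ^ 2 * k)} ≤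
      (gnp n q).real {ω | ¬ HasCrossDegree (graphOf ω) W (0.69 * n * q)} +
        (gnp n q).real
          {ω | ¬ IsCrossSparse (graphOf ω) W k (0.4 * n / r) (3 / 2 * k * (0.4 * n / r) * q)} +
        (gnp n q).real {ω | ¬ HasFewCherries (graphOf ω) W (n * q ^ 2 / (10 ^ 4 * r ^ 4))} := by
  have : IsProbabilityMeasure (gnp n q) := isProbabilityMeasure_bernoulliPi hq
  have : Nonempty (Fin r) := ⟨⟨0, hr⟩⟩
  refine (measureReal_mono (fun ω hω => ?_) (measure_ne_top _ _)).trans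
    ((measureReal_union_le _ _).trans (add_le_add_left (measureReal_union_le _ _) _))
  contrapose! hω
  simp only [Set.mem_union, Set.mem_ofPred_eq, not_or, not_not] at hω ⊢
  have hcover := hω.1.1.hasMonoCycleCover_card (ι := Fin r) (by rw [Fintype.card_fin])
    (mod_cast hn) (by rw [Fintype.card_fin]) (pos_of_mul_pos_right hkq k.cast_nonneg)
    (Nat.cast_pos.1 (pos_of_mul_pos_left hkq hq.1)) hω.1.2 hω.2
  rwa [Fintype.card_fin] at hcover

theorem gnp_real_not_hasMonoCycleCover_card_le {r : ℕ} (hr : 0 < r) (hn : 0 < n)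
    (hq : q ∈ Set.Icc 0 1) (hkq : 200 * r ≤ k * q) (hW : (#W : ℝ) ≤ n / (100 * r) ^ 4)
    (hnq : 2 * 10 ^ 5 * r ^ 4 * Real.log n ≤ n * q ^ 2) :
    (gnp n q).real {ω | ¬ HasMonoCycleCover (graphOf ω) (Fin r) W (3 * r ^ 2) (6 * r ^ 2 * k)} ≤
      (2 + Real.exp 2) / n := by
  have hr4 : (1 : ℝ) ≤ r ^ 4 := one_le_pow₀ (mod_cast hr)
  have : 0 ≤ Real.log n := Real.log_natCast_nonneg n
  have hdeg := gnp_real_not_hasCrossDegree_le hq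
    (hW.trans (div_le_div_of_nonneg_left n.cast_nonneg (by norm_num) (by nlinarith)))
    (by nlinarith [hq.1, hq.2]) hn
  have hsparse := gnp_real_not_isCrossSparse_le (W := W) (k := k) (m := 0.4 * n / r) hq
    (calc 80 * (n : ℝ) = 200 * r * (0.4 * n / r) := by field_simp; norm_num
      _ ≤ k * q * (0.4 * n / r) := by gcongr
      _ = k * (0.4 * n / r) * q := by ring) hn
  have hcherry := gnp_real_not_hasFewCherries_le (W := W) (θ := n * q ^ 2 / (10 ^ 4 * r ^ 4)) hq
    (calc 18 * #W * q ^ 2 ≤ 18 * (n / (100 * r) ^ 4) * q ^ 2 := by gcongr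
      _ = 0.0018 * (n * q ^ 2 / (10 ^ 4 * r ^ 4)) := by ring
      _ ≤ _ := mul_le_of_le_one_left (by positivity) (by norm_num))
    (by rw [le_div_iff₀ (by positivity)]; linarith) hn
  have hkq0 : 0 < k * q := hkq.trans_lt' (by positivity)
  calc _ ≤ _ := gnp_real_not_hasMonoCycleCover_card_le_add hr hn hq hkq0
    _ ≤ 1 / n + 1 / n + Real.exp 2 / n := add_le_add (add_le_add hdeg hsparse) hcherry
    _ = (2 + Real.exp 2) / n := by ring

theorem gnp_real_not_hasMonoCycleCover_le {r : ℕ} (hr : 0 < r) (hn : 0 < n)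
    (hq : q ∈ Set.Ioc 0 1) (hW : (#W : ℝ) ≤ n / (100 * r) ^ 4)
    (hnq : 2 * 10 ^ 5 * r ^ 4 * Real.log n ≤ n * q ^ 2) :
    (gnp n q).real {ω | ¬ HasMonoCycleCover (graphOf ω) (Fin r) W (3 * r ^ 2)
      (1206 * r ^ 3 / q)} ≤ (2 + Real.exp 2) / n := by
  have hq' : q ∈ Set.Icc 0 1 := Set.Ioc_subset_Icc_self hq
  have : IsProbabilityMeasure (gnp n q) := isProbabilityMeasure_bernoulliPi hq'
  have hq0 : 0 < q := hq.1
  have hk_le : ⌈200 * r / q⌉₊ ≤ 201 * r / q := by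
    have hone : 1 ≤ r / q := (one_le_div hq0).2 (hq.2.trans (mod_cast hr))
    calc (⌈200 * r / q⌉₊ : ℝ) ≤ 200 * r / q + 1 := (Nat.ceil_lt_add_one (by positivity)).le
      _ ≤ 200 * r / q + r / q := by gcongr
      _ = 201 * r / q := by ring
  refine (measureReal_mono (fun ω => mt fun h => h.mono_right ?_)
    (measure_ne_top _ _)).trans
    (gnp_real_not_hasMonoCycleCover_card_le hr hn hq' ((div_le_iff₀ hq0).1 (Nat.le_ceil _)) hW hnq)
  calc (6 * r ^ 2 * ⌈200 * r / q⌉₊ : ℝ) ≤ 6 * r ^ 2 * (201 * r / q) := by gcongr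
    _ = 1206 * r ^ 3 / q := by ring

end RandomGraph

section Main

open Topology

theorem tendsto_measure_one_of_measureReal_not_le {ι : Type*} {l : Filter ι} {Ω : ι → Type*}
    [∀ i, MeasurableSpace (Ω i)] {μ : ∀ i, Measure (Ω i)} {P : ∀ i, Ω i → Prop} {ε : ι → ℝ}
    (hμ : ∀ᶠ i in l, IsProbabilityMeasure (μ i)) (hε : Tendsto ε l (𝓝 0))
    (h : ∀ᶠ i in l, (μ i).real {ω | ¬ P i ω} ≤ ε i) :
    Tendsto (fun i => μ i {ω | P i ω}) l (𝓝 1) := by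
  have hlower : Tendsto (fun i => ENNReal.ofReal (1 - ε i)) l (𝓝 1) := by
    simpa using ENNReal.tendsto_ofReal (hε.const_sub 1)
  refine tendsto_of_tendsto_of_tendsto_of_le_of_le' hlower tendsto_const_nhds ?_
    (hμ.mono fun i _ => prob_le_one)
  filter_upwards [hμ, h] with i _ hi
  rw [ENNReal.ofReal_le_iff_le_toReal (measure_ne_top _ _), ← measureReal_def]
  have hunion := measureReal_union_le (μ := μ i) {ω | P i ω} {ω | P i ω}ᶜ
  rw [Set.union_compl_self, probReal_univ] at hunion
  rw [← Set.compl_ofPred] at hi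
  linarith

theorem mul_log_le_mul_sq_of_mul_sqrt_le {n C q : ℝ} (hn : 1 ≤ n) (hC : 0 ≤ C)
    (h : C * √(Real.log n / n) ≤ q) : C ^ 2 * Real.log n ≤ n * q ^ 2 := by
  have hdiv : 0 ≤ Real.log n / n := div_nonneg (Real.log_nonneg hn) (by linarith)
  calc C ^ 2 * Real.log n = n * (C * √(Real.log n / n)) ^ 2 := by
        rw [mul_pow, Real.sq_sqrt hdiv]
        field_simp
    _ ≤ n * q ^ 2 := by gcongr

theorem stmt1_general (r : ℕ) (hr : 0 < r) :
    ∃ K : ℝ, 0 < K ∧ ∃ C : ℝ, ∀ p : ℕ → ℝ, (∀ n, p n ≤ 1) →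
      (∀ᶠ n : ℕ in atTop, C * √(Real.log n / n) ≤ p n) →
      ∀ W : (n : ℕ) → Finset (Fin n), (∀ n : ℕ, (#(W n) : ℝ) ≤ n / (100 * r) ^ 4) →
        Tendsto (fun n => gnp n (p n)
          {ω | HasMonoCycleCover (graphOf ω) (Fin r) (W n) (3 * r ^ 2) (K / p n)}) atTop (𝓝 1) := by
  refine ⟨1206 * r ^ 3, by positivity, 1000 * r ^ 2, fun p hp1 hp W hW => ?_⟩
  have hmem : ∀ᶠ n in atTop, p n ∈ Set.Ioc 0 1 := by
    filter_upwards [hp, eventually_gt_atTop 1] with n hpn hn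
    have hlog : 0 < Real.log n := Real.log_pos (mod_cast hn)
    exact ⟨hpn.trans_lt' (by positivity), hp1 n⟩
  refine tendsto_measure_one_of_measureReal_not_le
    (hmem.mono fun n hn => isProbabilityMeasure_bernoulliPi (Set.Ioc_subset_Icc_self hn))
    (tendsto_const_div_atTop_nhds_zero_nat (2 + Real.exp 2)) ?_
  filter_upwards [hp, hmem, eventually_gt_atTop 0] with n hpn hpn_mem hn
  refine gnp_real_not_hasMonoCycleCover_le hr hn hpn_mem (hW n) (le_trans ?_
    (mul_log_le_mul_sq_of_mul_sqrt_le (mod_cast hn) (by positivity) hpn))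
  have : 0 ≤ Real.log n := Real.log_natCast_nonneg n
  calc 2 * 10 ^ 5 * r ^ 4 * Real.log n ≤ 10 ^ 6 * r ^ 4 * Real.log n := by gcongr; norm_num
    _ = (1000 * r ^ 2) ^ 2 * Real.log n := by ring

end Main

/-- For every integer `r ≥ 2` there is a constant `K = K(r) > 0` such that:
for fixed sets `W = W(n) ⊆ [n]` of at most `n/(100r)^4` vertices and `p = p(n) ≫ (log n/n)^{1/2}`,
w.h.p. for every `r`-coloring of the edges of `G ~ G(n,p)` there is a collection of (at most)
`3r^2` vertex-disjoint monochromatic cycles covering all but at most `K/p` vertices of `W`. -/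
theorem stmt1 (r : ℕ) (hr : 2 ≤ r) :
    ∃ K : ℝ, 0 < K ∧
      ∀ (p : ℕ → ℝ), (∀ n, 0 ≤ p n) → (∀ n, p n ≤ 1) →
        Tendsto (fun n : ℕ => p n / Real.sqrt (Real.log n / n)) atTop atTop →
        ∀ (W : (n : ℕ) → Finset (Fin n)),
          (∀ n : ℕ, ((W n).card : ℝ) ≤ (n : ℝ) / (100 * r : ℝ) ^ 4) →
          Tendsto (fun n => gnp n (p n)
            {ω | ∀ c : Sym2 (Fin n) → Fin r,
              ∃ 𝒞 : Finset (Set (Fin n)),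
                𝒞.card ≤ 3 * r ^ 2 ∧
                (𝒞 : Set (Set (Fin n))).Pairwise Disjoint ∧
                (∀ S ∈ 𝒞, ∃ i, IsMonoCycle (graphOf ω) c i S) ∧
                ((((W n : Set (Fin n)) \ ⋃₀ (𝒞 : Set (Set (Fin n)))).ncard : ℝ) ≤ K / p n)})
            atTop (nhds 1) := by
  obtain ⟨K, hK, C, h⟩ := stmt1_general r (by omega)
  exact ⟨K, hK, fun p hp0 hp1 hp => h p hp1 <| (hp.eventually_ge_atTop C).mono fun n hn =>
    mul_le_of_le_div₀ (hp0 n) (Real.sqrt_nonneg _) hn⟩
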